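/- arXiv:1607.08058 — 3 statements merged into one kernel-verified Lean document; each statement's English description precedes it below -/
import Mathlib

section
/- Every finite connected interval filament graph has cop number at most 2, and there exists a finite connected interval filament graph with cop number exactly 2. Hence the maximum cop number of the class of interval filament graphs equals 2. -/
/-!
Two filaments are disjoint only if their intervals are disjoint or one of them lies strictly
*below* the other (nested interval, smaller function), by the intermediate value theorem
(`filament_cases`). A cop standing on `v` confines a robber who is below `v`: a filament meeting
something below `v` and missing `v` is itself below `v` (`filament_confine`).

**Upper bound.** Suppose the first cop stands still and thereby confines the robber to a connected
set `H` of filaments. The filaments of `H` that are maximal for this order form an interval graph,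
and the second cop sweeps it from left to right: it starts at the filament of `H` with leftmost
left end, and as long as the robber is to the right it moves to a maximal filament of `H` reaching
further right. The robber can never slip to its left, so the sweep ends with a capture or with the
robber below the second cop (`sweep`, `win_of_territory`). Now the second cop confines the robber
and the first is free; the guarding filament is strictly lower than before, so the process stops
(`win_of_below`). To begin with, `H` is the set of all filaments.

**Lower bound.** The 4-cycle is an interval filament graph, and on it the robber escapes a single
cop by always moving to the vertex opposite to the cop.
-/


/-!  The game of cops and robber on a graph.

The cops first choose starting vertices, then the robber chooses a starting vertex;
the players then alternate turns, the cops moving first; each piece either stays or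
moves to an adjacent vertex.  A cop strategy chooses, at each cop turn, the new cop
positions as a function of the full history of robber positions (which, together with
the strategy itself, determines the full history of the play).  The robber, having
full information, is modelled as an arbitrary legal trajectory.  -/

/-- The sequence of cop positions determined by the initial placement `init`, the cop
strategy `F` (a function of the history of robber positions), and the robber trajectory
`rob`; `copSeq init F rob n` is the position of the cops before the robber's `n`-th move,
i.e. the cops' `(n+1)`-st positions respond to the robber positions `rob 0, …, rob n`. -/
def copSeq {V : Type*} {k : ℕ} (init : Fin k → V) (F : List V → Fin k → V)
    (rob : ℕ → V) : ℕ → Fin k → V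
  | 0 => init
  | n + 1 => F ((List.range (n + 1)).map rob)

/-- A robber trajectory is legal if at each turn the robber stays or moves along an edge. -/
def RobberLegal {V : Type*} (G : SimpleGraph V) (rob : ℕ → V) : Prop :=
  ∀ n, rob (n + 1) = rob n ∨ G.Adj (rob n) (rob (n + 1))

/-- A sequence of cop positions is legal if at each turn every cop stays or moves along an edge. -/
def CopsLegal {V : Type*} {k : ℕ} (G : SimpleGraph V) (c : ℕ → Fin k → V) : Prop :=
  ∀ n i, c (n + 1) i = c n i ∨ G.Adj (c n i) (c (n + 1) i)

/-- `k` cops have a winning strategy on `G`: there are initial positions and a legal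
strategy capturing every legal robber trajectory in finitely many turns (a cop occupies
the robber's vertex, either after the cops' move or after the robber's move). -/
def CopWin {V : Type*} (G : SimpleGraph V) (k : ℕ) : Prop :=
  ∃ (init : Fin k → V) (F : List V → Fin k → V),
    ∀ rob : ℕ → V, RobberLegal G rob →
      CopsLegal G (copSeq init F rob) ∧
      ∃ n i, copSeq init F rob n i = rob n ∨ copSeq init F rob (n + 1) i = rob n

/-- The cop number of `G`: the least `k` such that `k` cops have a winning strategy. -/
noncomputable def copNumber {V : Type*} (G : SimpleGraph V) : ℕ :=
  sInf { k | CopWin G k }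

/-- A string: the image of a continuous map `[0,1] → ℝ²`. -/
def IsString (s : Set (ℝ × ℝ)) : Prop :=
  ∃ f : ℝ → ℝ × ℝ, ContinuousOn f (Set.Icc 0 1) ∧ s = f '' Set.Icc 0 1

/-- An outer-string: a string contained in the closed upper half-plane, meeting the
`x`-axis in exactly one point, which is an endpoint of the string. -/
def IsOuterString (s : Set (ℝ × ℝ)) : Prop :=
  ∃ f : ℝ → ℝ × ℝ, ContinuousOn f (Set.Icc 0 1) ∧ s = f '' Set.Icc 0 1 ∧
    (∀ p ∈ s, 0 ≤ p.2) ∧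
    ∃ e : ℝ × ℝ, (e = f 0 ∨ e = f 1) ∧ {p : ℝ × ℝ | p ∈ s ∧ p.2 = 0} = {e}

/-- An interval filament: the graph of a continuous function `f : [a,b] → ℝ` with
`f a = f b = 0` and `f x > 0` on `(a,b)`. -/
def IsIntervalFilament (s : Set (ℝ × ℝ)) : Prop :=
  ∃ (a b : ℝ) (f : ℝ → ℝ), a < b ∧ ContinuousOn f (Set.Icc a b) ∧
    f a = 0 ∧ f b = 0 ∧ (∀ x ∈ Set.Ioo a b, 0 < f x) ∧
    s = (fun x => (x, f x)) '' Set.Icc a b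

/-! ### Positions won by two cops -/

/-- `WinN G n p q r`: with cops on `p`, `q`, the robber on `r` and the cops to move, the cops
can reach within `n` rounds a position where they capture by their next move (or already have). -/
def WinN {V : Type} (G : SimpleGraph V) : ℕ → V → V → V → Prop
  | 0, p, q, r => (p = r ∨ G.Adj p r) ∨ (q = r ∨ G.Adj q r)
  | n + 1, p, q, r => WinN G n p q r ∨ ∃ p' q', (p' = p ∨ G.Adj p p') ∧ (q' = q ∨ G.Adj q q') ∧
      ∀ r', (r' = r ∨ G.Adj r r') → WinN G n p' q' r'

/-- The position with cops on `p`, `q` and the robber on `r`, cops to move, is won by the cops. -/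
def Win {V : Type} (G : SimpleGraph V) (p q r : V) : Prop := ∃ n, WinN G n p q r

theorem WinN.swap {V : Type} {G : SimpleGraph V} {n : ℕ} :
    ∀ {p q r : V}, WinN G n p q r → WinN G n q p r := by
  induction n with
  | zero => intro p q r h; exact Or.symm h
  | succ n ih =>
    rintro p q r (h | ⟨p', q', hp, hq, h⟩)
    · exact Or.inl (ih h)
    · exact Or.inr ⟨q', p', hq, hp, fun r' hr' => ih (h r' hr')⟩

theorem Win.swap {V : Type} {G : SimpleGraph V} {p q r : V} (h : Win G p q r) : Win G q p r :=
  h.imp fun _ => WinN.swap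

theorem WinN.mono {V : Type} {G : SimpleGraph V} {m n : ℕ} (hmn : m ≤ n) {p q r : V}
    (h : WinN G m p q r) : WinN G n p q r := by
  induction hmn with
  | refl => exact h
  | step _ ih => exact Or.inl ih

theorem Win.caught {V : Type} {G : SimpleGraph V} {p q r : V} (h : p = r ∨ G.Adj p r) :
    Win G p q r := ⟨0, Or.inl h⟩

theorem Win.step {V : Type} [Fintype V] {G : SimpleGraph V} {p q r p' q' : V}
    (hp : p' = p ∨ G.Adj p p') (hq : q' = q ∨ G.Adj q q')
    (h : ∀ r', (r' = r ∨ G.Adj r r') → Win G p' q' r') : Win G p q r := by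
  classical
  have h' : ∀ r', ∃ n, (r' = r ∨ G.Adj r r') → WinN G n p' q' r' := by
    intro r'
    by_cases hr : r' = r ∨ G.Adj r r'
    · obtain ⟨n, hn⟩ := h r' hr
      exact ⟨n, fun _ => hn⟩
    · exact ⟨0, fun h => absurd h hr⟩
  choose n hn using h'
  exact ⟨Finset.univ.sup n + 1, Or.inr ⟨p', q', hp, hq, fun r' hr' =>
    (hn r' hr').mono (Finset.le_sup (Finset.mem_univ r'))⟩⟩

/-- In a won position the cops have a move that captures the robber or strictly decreases the
number of rounds needed; elsewhere they may stay put. -/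
theorem exists_move {V : Type} (G : SimpleGraph V) (c : Fin 2 → V) (r : V) :
    ∃ c' : Fin 2 → V, (∀ i, c' i = c i ∨ G.Adj (c i) (c' i)) ∧
      ∀ n, WinN G n (c 0) (c 1) r → (∃ i, c' i = r) ∨
        ∃ m < n, ∀ r', (r' = r ∨ G.Adj r r') → WinN G m (c' 0) (c' 1) r' := by
  classical
  by_cases hw : ∃ n, WinN G n (c 0) (c 1) r
  · have hmin : ∀ n, WinN G n (c 0) (c 1) r → Nat.find hw ≤ n := fun n hn => Nat.find_min' hw hn
    have hs := Nat.find_spec hw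
    rcases hk : Nat.find hw with _ | k
    · rw [hk] at hs
      rcases hs with h | h
      · refine ⟨![r, c 1], ?_, fun n _ => Or.inl ⟨0, rfl⟩⟩
        intro i
        fin_cases i
        · exact h.imp Eq.symm id
        · exact Or.inl rfl
      · refine ⟨![c 0, r], ?_, fun n _ => Or.inl ⟨1, rfl⟩⟩
        intro i
        fin_cases i
        · exact Or.inl rfl
        · exact h.imp Eq.symm id
    · rw [hk] at hs hmin
      rcases hs with h | ⟨p', q', hp, hq, h⟩
      · have := hmin k h
        omega
      · refine ⟨![p', q'], ?_, fun n hn => Or.inr ⟨k, hmin n hn, h⟩⟩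
        intro i
        fin_cases i
        · exact hp
        · exact hq
  · exact ⟨c, fun _ => Or.inl rfl, fun n hn => absurd ⟨n, hn⟩ hw⟩

theorem copWin_of_win {V : Type} (G : SimpleGraph V) (p q : V) (h : ∀ r, Win G p q r) :
    CopWin G 2 := by
  choose σ hσ hσ' using exists_move G
  -- A positional strategy becomes a function of the robber's history by replaying the play.
  refine ⟨![p, q], fun l => l.foldl σ ![p, q], fun rob hrob => ?_⟩
  set c := copSeq ![p, q] (fun l => l.foldl σ ![p, q]) rob with hc
  have hfold : ∀ n, c n = ((List.range n).map rob).foldl σ ![p, q] := by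
    intro n
    cases n <;> rfl
  have hsucc : ∀ n, c (n + 1) = σ (c n) (rob n) := by
    intro n
    rw [hfold (n + 1), hfold n, List.range_succ, List.map_append, List.foldl_append]
    rfl
  refine ⟨fun n i => ?_, ?_⟩
  · rw [hsucc]
    exact hσ _ _ i
  · have key : ∀ N n, WinN G N (c n 0) (c n 1) (rob n) →
        ∃ n i, c n i = rob n ∨ c (n + 1) i = rob n := by
      intro N
      induction N using Nat.strong_induction_on with
      | _ N ih =>
        intro n hn
        rcases hσ' _ _ N hn with ⟨i, hi⟩ | ⟨m, hm, hm'⟩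
        · exact ⟨n, i, Or.inr (by rw [hsucc, hi])⟩
        · refine ih m hm (n + 1) ?_
          rw [hsucc]
          exact hm' _ (hrob n)
    obtain ⟨N, hN⟩ := h (rob 0)
    exact key N 0 hN

/-! ### The sweeping strategy -/

/-- The combinatorial facts about a filament representation that the cops use: the interval
`[a v, b v]` of each filament and the relation `B u v` (`u` lies below `v`). -/
structure FilamentModel {V : Type} (G : SimpleGraph V) (a b : V → ℝ) (B : V → V → Prop) :
    Prop where
  cases : ∀ u v, u = v ∨ G.Adj u v ∨ b u < a v ∨ b v < a u ∨ B u v ∨ B v u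
  le : ∀ v, a v ≤ b v
  overlap : ∀ u v, G.Adj u v → a u ≤ b v
  nested : ∀ u v, B u v → a v < a u ∧ b u < b v
  confine : ∀ u v w, G.Adj u w → B u v → w = v ∨ G.Adj w v ∨ B w v

theorem wellFounded_gt_comp {V : Type} [Finite V] (g : V → ℝ) :
    WellFounded (fun x y : V => g y < g x) := by
  have : IsTrans V (fun x y : V => g y < g x) := ⟨fun _ _ _ h h' => h'.trans h⟩
  have : Std.Irrefl (fun x y : V => g y < g x) := ⟨fun _ => lt_irrefl _⟩
  exact Finite.wellFounded_of_trans_of_irrefl _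

/-- The sweep: the first cop confines the robber to the connected territory `H`, the second is on a
filament `c` that is maximal in `H`, and the robber is not to the left of `c`. Connectedness of
`H` is expressed by: a property constant along the edges inside `H` is constant on `H`. -/
theorem sweep {V : Type} [Fintype V] {G : SimpleGraph V} {a b : V → ℝ} {B : V → V → Prop}
    (M : FilamentModel G a b B) (c₁ : V) (H : Set V)
    (hclosed : ∀ r ∈ H, ∀ r', G.Adj r r' → r' ∈ H ∨ r' = c₁ ∨ G.Adj r' c₁)
    (hconn : ∀ P : V → Prop, (∀ x ∈ H, ∀ y ∈ H, G.Adj x y → P x → P y) →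
      ∀ x ∈ H, ∀ y ∈ H, P x → P y)
    (hbelow : ∀ v ∈ H, ∀ r ∈ H, B r v → ∀ x, Win G v x r) :
    ∀ c ∈ H, (∀ z ∈ H, ¬ B c z) → ∀ r ∈ H, ¬ b r < a c → Win G c₁ c r := by
  intro c
  induction c using (wellFounded_gt_comp b).induction with
  | _ c ih =>
    intro hc hmax r hr hleft
    rcases M.cases c r with h | h | h | h | h | h
    · exact (Win.caught (Or.inl h)).swap
    · exact (Win.caught (Or.inr h)).swap
    · -- Some filament of `H` straddles the right end of `c`, otherwise `H` would be split there.
      have hex : ∃ y, y ∈ H ∧ a y ≤ b c ∧ b c < b y := by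
        by_contra! hno
        have := hconn (fun y => b y ≤ b c) (fun x hx y hy hxy hxc =>
          hno y hy ((M.overlap _ _ hxy.symm).trans hxc)) c hc r hr le_rfl
        linarith [M.le r]
      -- One with leftmost left end is automatically maximal in `H`.
      obtain ⟨y, ⟨hyH, hy1, hy2⟩, hymin⟩ := (wellFounded_gt_comp fun v => - a v).has_min
        {y | y ∈ H ∧ a y ≤ b c ∧ b c < b y} hex
      have hymax : ∀ z ∈ H, ¬ B y z := by
        intro z hz hyz
        have := M.nested _ _ hyz
        exact hymin z ⟨hz, by linarith, by linarith⟩ (by simpa using this.1)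
      have hadj : G.Adj c y := by
        rcases M.cases c y with h' | h' | h' | h' | h' | h'
        · subst h'
          exact absurd hy2 (lt_irrefl _)
        · exact h'
        · linarith
        · linarith [M.le c]
        · exact absurd h' (hmax y hyH)
        · exact absurd h' (hymax c hc)
      refine Win.step (p' := c₁) (q' := y) (Or.inl rfl) (Or.inr hadj) fun r' hr' => ?_
      have hov : a r ≤ b r' := by
        rcases hr' with rfl | h'
        · exact M.le _
        · exact M.overlap _ _ h'
      have : r' ∈ H ∨ r' = c₁ ∨ G.Adj r' c₁ := by
        rcases hr' with rfl | h'
        · exact Or.inl hr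
        · exact hclosed r hr r' h'
      rcases this with h' | h' | h'
      · exact ih y hy2 hyH hymax r' h' (by linarith)
      · exact Win.caught (Or.inl h'.symm)
      · exact Win.caught (Or.inr h'.symm)
    · exact absurd h hleft
    · exact absurd h (hmax r hr)
    · exact (hbelow c hc r hr h c₁).swap

/-- If the first cop on `c₁` confines the robber to a connected territory `H`, and positions
with the robber below a cop inside `H` are won, then the cops win. -/
theorem win_of_territory {V : Type} [Fintype V] {G : SimpleGraph V} (hG : G.Connected)
    {a b : V → ℝ} {B : V → V → Prop}
    (M : FilamentModel G a b B) (c₁ : V) (H : Set V)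
    (hclosed : ∀ r ∈ H, ∀ r', G.Adj r r' → r' ∈ H ∨ r' = c₁ ∨ G.Adj r' c₁)
    (hconn : ∀ P : V → Prop, (∀ x ∈ H, ∀ y ∈ H, G.Adj x y → P x → P y) →
      ∀ x ∈ H, ∀ y ∈ H, P x → P y)
    (hbelow : ∀ v ∈ H, ∀ r ∈ H, B r v → ∀ x, Win G v x r) :
    ∀ r ∈ H, ∀ x, Win G c₁ x r := by
  intro r₀ hr₀ x
  obtain ⟨c, hcH, hcmin⟩ := (wellFounded_gt_comp fun v => - a v).has_min H ⟨r₀, hr₀⟩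
  simp only [neg_lt_neg_iff, not_lt] at hcmin
  have hstart : ∀ r ∈ H, Win G c₁ c r := fun r hr =>
    sweep M c₁ H hclosed hconn hbelow c hcH
      (fun z hz hB => not_lt.2 (hcmin z hz) (M.nested _ _ hB).1) r hr
      (not_lt.2 ((hcmin r hr).trans (M.le r)))
  -- The second cop first walks to `c`, while the first one keeps the robber inside `H`.
  have hwalk : Relation.ReflTransGen G.Adj x c :=
    (SimpleGraph.reachable_iff_reflTransGen x c).1 (hG.preconnected x c)
  have hall : ∀ r ∈ H, Win G c₁ x r := by
    induction hwalk using Relation.ReflTransGen.head_induction_on with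
    | refl => exact hstart
    | head hxy _ ih =>
      intro r hr
      refine Win.step (Or.inl rfl) (Or.inr hxy) fun r' hr' => ?_
      rcases hr' with rfl | h'
      · exact ih _ hr
      · rcases hclosed r hr r' h' with h | h | h
        · exact ih _ h
        · exact Win.caught (Or.inl h.symm)
        · exact Win.caught (Or.inr h.symm)
  exact hall r₀ hr₀

/-- A robber below a cop loses: its territory is a connected component of the filaments below
that cop, and the induction is on the cop's filament. -/
theorem win_of_below {V : Type} [Fintype V] {G : SimpleGraph V} (hG : G.Connected)
    {a b : V → ℝ} {B : V → V → Prop} (M : FilamentModel G a b B) :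
    ∀ v r, B r v → ∀ x, Win G v x r := by
  intro v
  induction v using (wellFounded_gt_comp a).induction with
  | _ v ih =>
    intro r hr
    have hB : ∀ w, Relation.ReflTransGen (fun x y => G.Adj x y ∧ B y v) r w → B w v := by
      intro w hw
      cases hw with
      | refl => exact hr
      | tail _ h => exact h.2
    refine win_of_territory hG M v
      {w | Relation.ReflTransGen (fun x y => G.Adj x y ∧ B y v) r w} ?_ ?_ ?_ r
      Relation.ReflTransGen.refl
    · intro s hs s' hss'
      rcases M.confine s v s' hss' (hB s hs) with h | h | h
      · exact Or.inr (Or.inl h)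
      · exact Or.inr (Or.inr h)
      · exact Or.inl (Relation.ReflTransGen.tail hs ⟨hss', h⟩)
    · intro P hP
      have key : ∀ w, Relation.ReflTransGen (fun x y => G.Adj x y ∧ B y v) r w →
          (P r ↔ P w) := by
        intro w hw
        induction hw with
        | refl => exact Iff.rfl
        | tail hxy h ih' =>
          exact ih'.trans ⟨hP _ hxy _ (hxy.tail h) h.1, hP _ (hxy.tail h) _ hxy h.1.symm⟩
      intro y hy z hz hPy
      exact (key z hz).1 ((key y hy).2 hPy)
    · intro v' hv' r' _ hr'
      exact ih v' (M.nested _ _ (hB v' hv')).1 r' hr'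

theorem copWin_two_of_model {V : Type} [Fintype V] {G : SimpleGraph V} (hG : G.Connected)
    {a b : V → ℝ} {B : V → V → Prop} (M : FilamentModel G a b B) : CopWin G 2 := by
  obtain ⟨p⟩ := hG.nonempty
  refine copWin_of_win G p p fun r => ?_
  refine win_of_territory hG M p Set.univ (fun _ _ _ _ => Or.inl trivial) ?_
    (fun v _ r _ h => win_of_below hG M v r h) r trivial p
  intro P hP x _ y _ hPx
  have hwalk : Relation.ReflTransGen G.Adj x y :=
    (SimpleGraph.reachable_iff_reflTransGen x y).1 (hG.preconnected x y)
  induction hwalk with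
  | refl => exact hPx
  | tail _ h ih => exact hP _ trivial _ trivial h (ih trivial)

/-! ### Geometry of filaments -/

/-- The filament of `f` on `[a, b]` lies strictly below that of `g` on `[c, d]`. -/
def Below (a b : ℝ) (f : ℝ → ℝ) (c d : ℝ) (g : ℝ → ℝ) : Prop :=
  c < a ∧ b < d ∧ ∀ x ∈ Set.Icc a b, f x < g x

theorem filament_nonneg {a b : ℝ} {f : ℝ → ℝ} (ha : f a = 0) (hb : f b = 0)
    (hpos : ∀ x ∈ Set.Ioo a b, 0 < f x) : ∀ x ∈ Set.Icc a b, 0 ≤ f x := by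
  rintro x ⟨h1, h2⟩
  rcases h1.eq_or_lt with rfl | h1
  · exact ha.ge
  rcases h2.eq_or_lt with rfl | h2
  · exact hb.ge
  exact (hpos x ⟨h1, h2⟩).le

/-- Disjoint filaments, the first of which starts no later than the second: the second one lies
to the right of the first or below it. -/
theorem filament_cases_aux {a b c d : ℝ} {f g : ℝ → ℝ} (hcd : c < d)
    (hf : ContinuousOn f (Set.Icc a b)) (hg : ContinuousOn g (Set.Icc c d))
    (ha : f a = 0) (hb : f b = 0) (hc : g c = 0) (hd : g d = 0)
    (hfpos : ∀ x ∈ Set.Ioo a b, 0 < f x) (hgpos : ∀ x ∈ Set.Ioo c d, 0 < g x)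
    (hac : a ≤ c)
    (hdis : ∀ x ∈ Set.Icc a b, x ∈ Set.Icc c d → f x ≠ g x) :
    b < c ∨ Below c d g a b f := by
  by_cases hbc : b < c
  · exact Or.inl hbc
  right
  push Not at hbc
  have hg0 := filament_nonneg hc hd hgpos
  have hfc : g c < f c := by
    rw [hc]
    refine lt_of_le_of_ne (filament_nonneg ha hb hfpos c ⟨hac, hbc⟩) fun h => ?_
    exact hdis c ⟨hac, hbc⟩ ⟨le_rfl, hcd.le⟩ (by rw [← h, hc])
  have hac' : a < c := by
    refine lt_of_le_of_ne hac fun h => ?_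
    rw [← h, ha, h, hc] at hfc
    exact lt_irrefl _ hfc
  -- On the common part of the intervals the two functions cannot change order.
  have key : ∀ x, c ≤ x → x ≤ b → x ≤ d → g x < f x := by
    intro x hcx hxb hxd
    by_contra! hle
    have hcont : ContinuousOn (fun t => f t - g t) (Set.Icc c x) :=
      (hf.mono (Set.Icc_subset_Icc hac hxb)).sub (hg.mono (Set.Icc_subset_Icc le_rfl hxd))
    obtain ⟨t, ht, ht0⟩ := intermediate_value_Icc' hcx hcont
      (show (0 : ℝ) ∈ Set.Icc (f x - g x) (f c - g c) from ⟨by linarith, by linarith⟩)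
    exact hdis t ⟨hac.trans ht.1, ht.2.trans hxb⟩ ⟨ht.1, ht.2.trans hxd⟩ (sub_eq_zero.1 ht0)
  have hdb : d < b := by
    by_contra! hbd
    have h1 := key b hbc le_rfl hbd
    have h2 := hg0 b ⟨hbc, hbd⟩
    linarith
  exact ⟨hac', hdb, fun x hx => key x hx.1 (hx.2.trans hdb.le) hx.2⟩

/-- Two filaments meet, or have disjoint intervals, or one of them is below the other. -/
theorem filament_cases {a b c d : ℝ} {f g : ℝ → ℝ} (hab : a < b) (hcd : c < d)
    (hf : ContinuousOn f (Set.Icc a b)) (hg : ContinuousOn g (Set.Icc c d))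
    (ha : f a = 0) (hb : f b = 0) (hc : g c = 0) (hd : g d = 0)
    (hfpos : ∀ x ∈ Set.Ioo a b, 0 < f x) (hgpos : ∀ x ∈ Set.Ioo c d, 0 < g x) :
    (∃ x ∈ Set.Icc a b, x ∈ Set.Icc c d ∧ f x = g x) ∨ b < c ∨ d < a ∨
      Below a b f c d g ∨ Below c d g a b f := by
  by_cases hdis : ∃ x ∈ Set.Icc a b, x ∈ Set.Icc c d ∧ f x = g x
  · exact Or.inl hdis
  right
  push Not at hdis
  rcases le_total a c with h | h
  · rcases filament_cases_aux hcd hf hg ha hb hc hd hfpos hgpos h hdis with h | h <;> tauto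
  · rcases filament_cases_aux hab hg hf hc hd ha hb hgpos hfpos h
      (fun x h1 h2 h3 => hdis x h2 h1 h3.symm) with h | h <;> tauto

theorem graph_inter_nonempty {a b c d : ℝ} {f g : ℝ → ℝ} :
    ((fun x => (x, f x)) '' Set.Icc a b ∩ (fun x => (x, g x)) '' Set.Icc c d).Nonempty ↔
      ∃ x ∈ Set.Icc a b, x ∈ Set.Icc c d ∧ f x = g x := by
  constructor
  · rintro ⟨_, ⟨x, hx, rfl⟩, ⟨y, hy, hxy⟩⟩
    obtain ⟨rfl, h⟩ := Prod.mk.inj hxy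
    exact ⟨y, hx, hy, h.symm⟩
  · rintro ⟨x, hx, hy, h⟩
    exact ⟨(x, f x), ⟨x, hx, rfl⟩, ⟨x, hy, by simp [h]⟩⟩

/-- A filament meeting one that lies below `(a₂, b₂, f₂)` meets `(a₂, b₂, f₂)` or is below it. -/
theorem filament_confine {a₁ b₁ a₂ b₂ a₃ b₃ : ℝ} {f₁ f₂ f₃ : ℝ → ℝ}
    (h12 : Below a₁ b₁ f₁ a₂ b₂ f₂)
    (h13 : ∃ x ∈ Set.Icc a₁ b₁, x ∈ Set.Icc a₃ b₃ ∧ f₁ x = f₃ x)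
    (hcases : (∃ x ∈ Set.Icc a₃ b₃, x ∈ Set.Icc a₂ b₂ ∧ f₃ x = f₂ x) ∨ b₃ < a₂ ∨ b₂ < a₃ ∨
      Below a₃ b₃ f₃ a₂ b₂ f₂ ∨ Below a₂ b₂ f₂ a₃ b₃ f₃) :
    (∃ x ∈ Set.Icc a₃ b₃, x ∈ Set.Icc a₂ b₂ ∧ f₃ x = f₂ x) ∨ Below a₃ b₃ f₃ a₂ b₂ f₂ := by
  obtain ⟨h1, h2, h3⟩ := h12
  obtain ⟨x, hx1, hx3, hx⟩ := h13
  have hlt := h3 x hx1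
  obtain ⟨p1, p2⟩ := hx1
  obtain ⟨p3, p4⟩ := hx3
  rcases hcases with h | h | h | h | h
  · exact Or.inl h
  · linarith
  · linarith
  · exact Or.inr h
  · have := h.2.2 x ⟨by linarith, by linarith⟩
    linarith

theorem copWin_two {V : Type} [Fintype V] (G : SimpleGraph V) (hG : G.Connected)
    (hS : ∃ S : V → Set (ℝ × ℝ), (∀ v, IsIntervalFilament (S v)) ∧
      ∀ u v, G.Adj u v ↔ u ≠ v ∧ (S u ∩ S v).Nonempty) : CopWin G 2 := by
  obtain ⟨S, hS, hadj⟩ := hS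
  choose a b f hab hcont ha hb hpos hSeq using hS
  have hadj' : ∀ u v, G.Adj u v ↔ u ≠ v ∧
      ∃ x ∈ Set.Icc (a u) (b u), x ∈ Set.Icc (a v) (b v) ∧ f u x = f v x := by
    intro u v
    rw [hadj, hSeq u, hSeq v, graph_inter_nonempty]
  have hcases := fun u v => filament_cases (hab u) (hab v) (hcont u) (hcont v) (ha u) (hb u)
    (ha v) (hb v) (hpos u) (hpos v)
  refine copWin_two_of_model hG (a := a) (b := b)
    (B := fun u v => Below (a u) (b u) (f u) (a v) (b v) (f v)) ⟨?_, ?_, ?_, ?_, ?_⟩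
  · intro u v
    by_cases huv : u = v
    · exact Or.inl huv
    · right
      rcases hcases u v with h | h
      · exact Or.inl ((hadj' u v).2 ⟨huv, h⟩)
      · exact Or.inr h
  · exact fun v => (hab v).le
  · intro u v h
    obtain ⟨_, x, hx, hx', _⟩ := (hadj' u v).1 h
    exact hx.1.trans hx'.2
  · exact fun u v h => ⟨h.1, h.2.1⟩
  · intro u v w huw huv
    rcases filament_confine huv ((hadj' u w).1 huw).2 (hcases w v) with h | h
    · by_cases hwv : w = v
      · exact Or.inl hwv
      · exact Or.inr (Or.inl ((hadj' w v).2 ⟨hwv, h⟩))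
    · exact Or.inr (Or.inr h)

/-! ### The 4-cycle -/

/-- The 4-cycle, as the graph on `Fin 4` joining numbers of different parity. -/
def cycleFour : SimpleGraph (Fin 4) where
  Adj i j := i.val % 2 ≠ j.val % 2
  symm := ⟨fun _ _ h => Ne.symm h⟩
  loopless := ⟨fun _ h => h rfl⟩

instance : DecidableRel cycleFour.Adj := fun i j =>
  inferInstanceAs (Decidable (i.val % 2 ≠ j.val % 2))

theorem cycleFour_connected : cycleFour.Connected := by
  have h0 : ∀ i : Fin 4, cycleFour.Reachable 0 i := by
    have h1 : cycleFour.Reachable 0 1 := SimpleGraph.Adj.reachable (by decide)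
    intro i
    fin_cases i
    · exact SimpleGraph.Reachable.refl _
    · exact h1
    · exact h1.trans (SimpleGraph.Adj.reachable (by decide))
    · exact SimpleGraph.Adj.reachable (by decide)
  exact ⟨fun i j => (h0 i).symm.trans (h0 j)⟩

theorem isIntervalFilament_parabola {a b : ℝ} (hab : a < b) :
    IsIntervalFilament ((fun x => (x, (x - a) * (b - x))) '' Set.Icc a b) :=
  ⟨a, b, fun x => (x - a) * (b - x), hab, by fun_prop, by ring, by ring,
    fun x hx => mul_pos (sub_pos.2 hx.1) (sub_pos.2 hx.2), rfl⟩

/-- The 4-cycle is represented by the parabolas `(x - a) (b - x)` over `[0, 3]`, `[2, 5]`,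
`[4, 7]`, `[1, 6]`: overlapping intervals give crossing parabolas, and the second parabola is
below the fourth. -/
theorem cycleFour_filament :
    ∃ S : Fin 4 → Set (ℝ × ℝ), (∀ v, IsIntervalFilament (S v)) ∧
      ∀ u v, cycleFour.Adj u v ↔ u ≠ v ∧ (S u ∩ S v).Nonempty := by
  let a : Fin 4 → ℝ := ![0, 2, 4, 1]
  let b : Fin 4 → ℝ := ![3, 5, 7, 6]
  refine ⟨fun v => (fun x => (x, (x - a v) * (b v - x))) '' Set.Icc (a v) (b v), ?_, ?_⟩
  · intro v
    refine isIntervalFilament_parabola ?_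
    fin_cases v <;> simp [a, b] <;> norm_num
  · have h01 : ∃ x ∈ Set.Icc (a 0) (b 0), x ∈ Set.Icc (a 1) (b 1) ∧
        (x - a 0) * (b 0 - x) = (x - a 1) * (b 1 - x) :=
      ⟨5 / 2, by simp [a, b]; norm_num, by simp [a, b]; norm_num, by simp [a, b]; norm_num⟩
    have h03 : ∃ x ∈ Set.Icc (a 0) (b 0), x ∈ Set.Icc (a 3) (b 3) ∧
        (x - a 0) * (b 0 - x) = (x - a 3) * (b 3 - x) :=
      ⟨3 / 2, by simp [a, b]; norm_num, by simp [a, b]; norm_num, by simp [a, b]; norm_num⟩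
    have h12 : ∃ x ∈ Set.Icc (a 1) (b 1), x ∈ Set.Icc (a 2) (b 2) ∧
        (x - a 1) * (b 1 - x) = (x - a 2) * (b 2 - x) :=
      ⟨9 / 2, by simp [a, b]; norm_num, by simp [a, b]; norm_num, by simp [a, b]; norm_num⟩
    have h23 : ∃ x ∈ Set.Icc (a 2) (b 2), x ∈ Set.Icc (a 3) (b 3) ∧
        (x - a 2) * (b 2 - x) = (x - a 3) * (b 3 - x) :=
      ⟨11 / 2, by simp [a, b]; norm_num, by simp [a, b]; norm_num, by simp [a, b]; norm_num⟩
    have h02 : ¬ ∃ x ∈ Set.Icc (a 0) (b 0), x ∈ Set.Icc (a 2) (b 2) ∧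
        (x - a 0) * (b 0 - x) = (x - a 2) * (b 2 - x) := by
      rintro ⟨x, hx, hy, _⟩
      simp [a, b] at hx hy
      linarith [hx.2, hy.1]
    have h13 : ¬ ∃ x ∈ Set.Icc (a 1) (b 1), x ∈ Set.Icc (a 3) (b 3) ∧
        (x - a 1) * (b 1 - x) = (x - a 3) * (b 3 - x) := by
      rintro ⟨x, _, _, h⟩
      simp [a, b] at h
      linarith
    have hswap : ∀ u v : Fin 4, (∃ x ∈ Set.Icc (a u) (b u), x ∈ Set.Icc (a v) (b v) ∧
        (x - a u) * (b u - x) = (x - a v) * (b v - x)) →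
        ∃ x ∈ Set.Icc (a v) (b v), x ∈ Set.Icc (a u) (b u) ∧
        (x - a v) * (b v - x) = (x - a u) * (b u - x) :=
      fun u v ⟨x, h1, h2, h3⟩ => ⟨x, h2, h1, h3.symm⟩
    intro u v
    rw [graph_inter_nonempty]
    fin_cases u <;> fin_cases v
    · exact iff_of_false (by decide) (fun h => h.1 rfl)
    · exact iff_of_true (by decide) ⟨by decide, h01⟩
    · exact iff_of_false (by decide) (fun h => h02 h.2)
    · exact iff_of_true (by decide) ⟨by decide, h03⟩
    · exact iff_of_true (by decide) ⟨by decide, hswap _ _ h01⟩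
    · exact iff_of_false (by decide) (fun h => h.1 rfl)
    · exact iff_of_true (by decide) ⟨by decide, h12⟩
    · exact iff_of_false (by decide) (fun h => h13 h.2)
    · exact iff_of_false (by decide) (fun h => h02 (hswap _ _ h.2))
    · exact iff_of_true (by decide) ⟨by decide, hswap _ _ h12⟩
    · exact iff_of_false (by decide) (fun h => h.1 rfl)
    · exact iff_of_true (by decide) ⟨by decide, h23⟩
    · exact iff_of_true (by decide) ⟨by decide, hswap _ _ h03⟩
    · exact iff_of_false (by decide) (fun h => h13 (hswap _ _ h.2))
    · exact iff_of_true (by decide) ⟨by decide, hswap _ _ h23⟩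
    · exact iff_of_false (by decide) (fun h => h.1 rfl)

/-- The robber's evasion on the 4-cycle against a single cop with strategy `F`: the list of all
robber positions up to round `n`, and the last of them. The robber moves opposite to the cop when
that is a legal move (which it is against a legal strategy), and otherwise stays. -/
def evade (x : Fin 4) (F : List (Fin 4) → Fin 1 → Fin 4) : ℕ → List (Fin 4) × Fin 4
  | 0 => ([x + 2], x + 2)
  | n + 1 =>
    let r := (evade x F n).2
    let t := F (evade x F n).1 0 + 2
    let r' := if t = r ∨ cycleFour.Adj r t then t else r
    ((evade x F n).1 ++ [r'], r')

theorem not_copWin_one : ¬ CopWin cycleFour 1 := by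
  rintro ⟨init, F, h⟩
  set rob : ℕ → Fin 4 := fun n => (evade (init 0) F n).2 with hrobdef
  have hlist : ∀ n, (evade (init 0) F n).1 = (List.range (n + 1)).map rob := by
    intro n
    induction n with
    | zero => rfl
    | succ n ih =>
      rw [List.range_succ, List.map_append, ← ih]
      rfl
  have hstep : ∀ n, rob (n + 1) = if copSeq init F rob (n + 1) 0 + 2 = rob n ∨
      cycleFour.Adj (rob n) (copSeq init F rob (n + 1) 0 + 2)
      then copSeq init F rob (n + 1) 0 + 2 else rob n := by
    intro n
    have : copSeq init F rob (n + 1) = F (evade (init 0) F n).1 := by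
      rw [hlist]
      rfl
    rw [this]
    rfl
  obtain ⟨hc, n, i, hn⟩ := h rob (by
    intro n
    rw [hstep]
    split_ifs with hif
    · exact hif
    · exact Or.inl rfl)
  -- Taking opposite vertices maps closed neighbourhoods to closed neighbourhoods.
  have hanti : ∀ x y : Fin 4, (y = x ∨ cycleFour.Adj x y) →
      y + 2 = x + 2 ∨ cycleFour.Adj (x + 2) (y + 2) := by decide
  have hopp : ∀ n, rob n = copSeq init F rob n 0 + 2 := by
    intro n
    induction n with
    | zero => rfl
    | succ n ih =>
      rw [hstep, if_pos]
      rw [ih]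
      exact hanti _ _ (hc n 0)
  have hfar : ∀ x y : Fin 4, (y = x ∨ cycleFour.Adj x y) → ¬ (x = x + 2 ∨ y = x + 2) := by
    decide
  obtain rfl : i = 0 := Subsingleton.elim _ _
  rw [hopp n] at hn
  exact hfar _ _ (hc n 0) hn

theorem not_copWin_zero : ¬ CopWin cycleFour 0 := by
  rintro ⟨init, F, h⟩
  obtain ⟨_, _, i, _⟩ := h (fun _ => 0) (fun _ => Or.inl rfl)
  exact i.elim0

theorem copNumber_cycleFour : copNumber cycleFour = 2 := by
  have h2 : CopWin cycleFour 2 := copWin_two _ cycleFour_connected cycleFour_filament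
  have hle : copNumber cycleFour ≤ 2 := Nat.sInf_le h2
  have hmem : CopWin cycleFour (copNumber cycleFour) :=
    Nat.sInf_mem (s := {k | CopWin cycleFour k}) ⟨2, h2⟩
  have h0 : copNumber cycleFour ≠ 0 := fun h => not_copWin_zero (h ▸ hmem)
  have h1 : copNumber cycleFour ≠ 1 := fun h => not_copWin_one (h ▸ hmem)
  omega

/-- Every finite connected interval filament graph has cop number at most 2, and some
finite connected interval filament graph has cop number exactly 2; hence the maximum
cop number of the class of interval filament graphs equals 2. -/
theorem maxCopNumber_intervalFilament :
    (∀ (V : Type) [Fintype V] (G : SimpleGraph V), G.Connected →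
      (∃ S : V → Set (ℝ × ℝ), (∀ v, IsIntervalFilament (S v)) ∧
        ∀ u v, G.Adj u v ↔ u ≠ v ∧ (S u ∩ S v).Nonempty) →
      copNumber G ≤ 2) ∧
    (∃ (n : ℕ) (G : SimpleGraph (Fin n)), G.Connected ∧
      (∃ S : Fin n → Set (ℝ × ℝ), (∀ v, IsIntervalFilament (S v)) ∧
        ∀ u v, G.Adj u v ↔ u ≠ v ∧ (S u ∩ S v).Nonempty) ∧
      copNumber G = 2) := by
  refine ⟨fun V _ G hG hS => Nat.sInf_le (copWin_two G hG hS), 4, cycleFour,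
    cycleFour_connected, cycleFour_filament, copNumber_cycleFour⟩
end

section
/- Every finite connected outer-string graph has cop number at most 4. -/
/-! ### Continuous logarithms in the plane -/

namespace OuterString

open Set Complex

/-- A nowhere vanishing continuous function on a simply connected, locally path connected space
has a continuous logarithm. -/
lemma exists_log {X : Type*} [TopologicalSpace X] [SimplyConnectedSpace X]
    [LocallyPathConnectedSpace X] {F : X → ℂ} (hF : Continuous F) (h0 : ∀ x, F x ≠ 0) :
    ∃ Λ : X → ℂ, Continuous Λ ∧ ∀ x, exp (Λ x) = F x := by
  obtain ⟨x₀⟩ : Nonempty X := inferInstance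
  obtain ⟨Λ, ⟨-, hΛ⟩, -⟩ := isCoveringMapOn_exp.existsUnique_continuousMap_lifts
    (⟨F, hF⟩ : C(X, ℂ)) (a₀ := x₀) (exp_log (h0 x₀)) (fun a => by simpa using h0 a)
  exact ⟨Λ, Λ.continuous, fun x => by simpa using congrFun hΛ x⟩

/-- Two continuous logarithms of the same function on a preconnected set differ by a constant. -/
lemma log_sub_const {X : Type*} [TopologicalSpace X] {s : Set X} (hs : IsPreconnected s)
    {f g : X → ℂ} (hf : ContinuousOn f s) (hg : ContinuousOn g s)
    (h : ∀ x ∈ s, exp (f x) = exp (g x)) {a b : X} (ha : a ∈ s) (hb : b ∈ s) :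
    f a - g a = f b - g b := by
  have := isCoveringMap_exp.eqOn_of_comp_eqOn (g₁ := fun x => f x - g x)
    (g₂ := fun _ => f a - g a) hs (hf.sub hg) continuousOn_const
    (fun x hx => by simp [Complex.exp_sub, h x hx, h a ha]) ha rfl
  exact (this hb).symm

/-- The branch of the logarithm that is continuous on the closed upper half-plane minus `0`. -/
noncomputable def logUp (z : ℂ) : ℂ := log (-I * z) + Real.pi / 2 * I

/-- The branch of the logarithm that is continuous on the closed lower half-plane minus `0`. -/
noncomputable def logLow (z : ℂ) : ℂ := log (I * z) - Real.pi / 2 * I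

lemma exp_pi_half_I : exp (Real.pi / 2 * I) = I := by
  rw [exp_mul_I, ← ofReal_ofNat, ← ofReal_div, ← ofReal_cos, ← ofReal_sin]; simp

lemma exp_logUp {z : ℂ} (hz : z ≠ 0) : exp (logUp z) = z := by
  rw [logUp, Complex.exp_add, exp_log (by simp [hz]), exp_pi_half_I]
  linear_combination -z * I_mul_I

lemma exp_logLow {z : ℂ} (hz : z ≠ 0) : exp (logLow z) = z := by
  rw [logLow, Complex.exp_sub, exp_log (by simp [hz]), exp_pi_half_I]
  field_simp

lemma continuousAt_logUp {z : ℂ} (hz : z ≠ 0) (hi : 0 ≤ z.im) : ContinuousAt logUp z := by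
  have h : -I * z ∈ slitPlane := by
    rw [mem_slitPlane_iff]
    simp only [neg_mul, neg_re, neg_im, I_mul_re, I_mul_im, neg_neg, neg_ne_zero]
    rcases hi.lt_or_eq with h | h
    · exact Or.inl h
    · exact Or.inr fun h' => hz (Complex.ext h' h.symm)
  unfold logUp
  exact ((continuousAt_const.mul continuousAt_id).clog h).add continuousAt_const

lemma continuousAt_logLow {z : ℂ} (hz : z ≠ 0) (hi : z.im ≤ 0) : ContinuousAt logLow z := by
  have h : I * z ∈ slitPlane := by
    rw [mem_slitPlane_iff]
    simp only [I_mul_re, I_mul_im]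
    rcases hi.lt_or_eq with h | h
    · exact Or.inl (by linarith)
    · exact Or.inr fun h' => hz (Complex.ext h' h)
  unfold logLow
  exact ((continuousAt_const.mul continuousAt_id).clog h).sub continuousAt_const

lemma logUp_pos {x : ℝ} (hx : 0 < x) : logUp x = Real.log x := by
  rw [logUp, mul_comm, log_ofReal_mul hx (by simp), log_neg_I]; ring

lemma logLow_pos {x : ℝ} (hx : 0 < x) : logLow x = Real.log x := by
  rw [logLow, mul_comm, log_ofReal_mul hx (by simp), log_I]; ring

lemma logUp_neg {x : ℝ} (hx : 0 < x) : logUp (-x) = Real.log x + Real.pi * I := by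
  rw [logUp, show -I * -(x : ℂ) = x * I by ring, log_ofReal_mul hx (by simp), log_I]; ring

lemma logLow_neg {x : ℝ} (hx : 0 < x) : logLow (-x) = Real.log x - Real.pi * I := by
  rw [logLow, show I * -(x : ℂ) = x * -I by ring, log_ofReal_mul hx (by simp), log_neg_I]; ring

/-! ### Two planar separation facts -/

/-- Path connected subsets of the closed upper half-plane whose real points alternate must meet.
If not, pick paths `f` from `a` to `c` and `g` from `b` to `d`; then `f s - g t` has a continuous
logarithm on the square, but going around the boundary of the square it would change by `2πi`. -/
lemma cross {P Q : Set ℂ} (hP : IsPathConnected P) (hQ : IsPathConnected Q)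
    (hP0 : ∀ z ∈ P, 0 ≤ z.im) (hQ0 : ∀ z ∈ Q, 0 ≤ z.im) {a b c d : ℝ} (hab : a < b) (hbc : b < c)
    (hcd : c < d) (ha : (a : ℂ) ∈ P) (hc : (c : ℂ) ∈ P) (hb : (b : ℂ) ∈ Q) (hd : (d : ℂ) ∈ Q) :
    (P ∩ Q).Nonempty := by
  by_contra hne
  rw [not_nonempty_iff_eq_empty] at hne
  have hJf := hP.joinedIn _ ha _ hc
  have hJg := hQ.joinedIn _ hb _ hd
  obtain ⟨f, hf⟩ : ∃ f : Path (a : ℂ) c, ∀ t, f t ∈ P := ⟨hJf.somePath, hJf.somePath_mem⟩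
  obtain ⟨g, hg⟩ : ∃ g : Path (b : ℂ) d, ∀ t, g t ∈ Q := ⟨hJg.somePath, hJg.somePath_mem⟩
  have hfe : ∀ t, f.extend t ∈ P := fun t => hf _
  have hge : ∀ t, g.extend t ∈ Q := fun t => hg _
  have hcf : Continuous f.extend := f.continuous_extend
  have hcg : Continuous g.extend := g.continuous_extend
  have hPQ : ∀ p ∈ P, ∀ q ∈ Q, p - q ≠ 0 := fun p hp q hq h0 => by
    have : p ∈ P ∩ Q := ⟨hp, by rwa [sub_eq_zero.1 h0]⟩
    simp [hne] at this
  obtain ⟨Λ, hΛ, hexp⟩ := exists_log (X := ℝ × ℝ) (F := fun x => f.extend x.1 - g.extend x.2)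
    (by fun_prop) (fun x => hPQ _ (hfe _) _ (hge _))
  -- vertical sides of the square: a real point minus a point of the upper half-plane
  have low : ∀ (s : ℝ) (p : ℝ), f.extend s = p →
      Λ (s, 0) - logLow (p - b) = Λ (s, 1) - logLow (p - d) := by
    intro s p hp
    have := log_sub_const (s := univ) isPreconnected_univ (f := fun t : ℝ => Λ (s, t))
      (g := fun t => logLow (p - g.extend t)) (by fun_prop)
      (fun t _ => by
        have h0 : (p : ℂ) - g.extend t ≠ 0 := hPQ _ (hp ▸ hfe s) _ (hge t)
        have := continuousAt_logLow h0 (by simpa using hQ0 _ (hge t))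
        exact (ContinuousAt.comp (f := fun t => (p : ℂ) - g.extend t) this
          (by fun_prop)).continuousWithinAt)
      (fun t _ => by
        rw [hexp, exp_logLow (hPQ _ (hp ▸ hfe s) _ (hge t)), hp]) (mem_univ 0) (mem_univ 1)
    simpa using this
  -- horizontal sides: a point of the upper half-plane minus a real point
  have up : ∀ (t : ℝ) (q : ℝ), g.extend t = q →
      Λ (0, t) - logUp (a - q) = Λ (1, t) - logUp (c - q) := by
    intro t q hq
    have := log_sub_const (s := univ) isPreconnected_univ (f := fun s : ℝ => Λ (s, t))
      (g := fun s => logUp (f.extend s - q)) (by fun_prop)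
      (fun s _ => by
        have h0 : f.extend s - (q : ℂ) ≠ 0 := hPQ _ (hfe s) _ (hq ▸ hge t)
        have := continuousAt_logUp h0 (by simpa using hP0 _ (hfe s))
        exact (ContinuousAt.comp (f := fun s => f.extend s - (q : ℂ)) this
          (by fun_prop)).continuousWithinAt)
      (fun s _ => by
        rw [hexp, exp_logUp (hPQ _ (hfe s) _ (hq ▸ hge t)), hq]) (mem_univ 0) (mem_univ 1)
    simpa using this
  have e1 := low 0 a (by simp)
  have e2 := low 1 c (by simp)
  have e3 := up 0 b (by simp)
  have e4 := up 1 d (by simp)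
  have n : ∀ x y : ℝ, (x : ℂ) - y = -((y - x : ℝ) : ℂ) := fun x y => by push_cast; ring
  have p : ∀ x y : ℝ, (x : ℂ) - y = ((x - y : ℝ) : ℂ) := fun x y => by push_cast; ring
  rw [n a b, n a d, logLow_neg (by linarith), logLow_neg (by linarith)] at e1
  rw [p c b, n c d, logLow_pos (by linarith), logLow_neg (by linarith)] at e2
  rw [n a b, p c b, logUp_neg (by linarith), logUp_pos (by linarith)] at e3
  rw [n a d, n c d, logUp_neg (by linarith), logUp_neg (by linarith)] at e4
  have key : (2 * Real.pi : ℂ) * I = 0 := by linear_combination e1 + e4 - e3 - e2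
  simp [Real.pi_ne_zero] at key

/-- Janiszewski-type fact: if the real points of `L` and `R` lie left and right of `t`
respectively, the union of the disjoint compact sets `L` and `R` does not separate `t` from
infinity in the closed upper half-plane. After reflecting in the real axis, `z - t` has a
continuous logarithm on `K`, the union of the reflected sets; if `t` lay in a component `U` of the
complement of `K` not reaching `d`, replacing `z - t` on `U` by the exponential of an extension of
this logarithm would give a nowhere zero continuous function on the plane with winding number `1`
on a large circle. -/
lemma escape {L R : Set ℂ} (hL : IsCompact L) (hR : IsCompact R) (hLR : Disjoint L R)
    (hL0 : ∀ z ∈ L, 0 ≤ z.im) (hR0 : ∀ z ∈ R, 0 ≤ z.im) {t d : ℝ}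
    (hLt : ∀ x : ℝ, (x : ℂ) ∈ L → x < t) (hRt : ∀ x : ℝ, (x : ℂ) ∈ R → t < x)
    (hLd : ∀ z ∈ L, ‖z‖ < d) (hRd : ∀ z ∈ R, ‖z‖ < d) (htd : |t| < d) :
    JoinedIn {z : ℂ | 0 ≤ z.im ∧ z ∉ L ∧ z ∉ R} t d := by
  classical
  have hd0 : 0 < d := (abs_nonneg t).trans_lt htd
  set K₁ : Set ℂ := L ∪ (starRingEnd ℂ) ⁻¹' L with hK₁
  set K₂ : Set ℂ := R ∪ (starRingEnd ℂ) ⁻¹' R with hK₂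
  have c₁ : IsClosed K₁ := hL.isClosed.union (hL.isClosed.preimage continuous_conj)
  have c₂ : IsClosed K₂ := hR.isClosed.union (hR.isClosed.preimage continuous_conj)
  have hreal : ∀ z : ℂ, z.im = 0 → (z.re : ℂ) = z := fun z hz => by
    apply Complex.ext <;> simp [hz]
  have hK12 : ∀ z ∈ K₁, z ∉ K₂ := by
    rintro z (h1 | h1) (h2 | h2)
    · exact disjoint_left.1 hLR h1 h2
    · have := hL0 _ h1; have h3 := hR0 _ h2
      rw [conj_im] at h3
      rw [mem_preimage, conj_eq_iff_im.2 (by linarith)] at h2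
      exact disjoint_left.1 hLR h1 h2
    · have := hR0 _ h2; have h3 := hL0 _ h1
      rw [conj_im] at h3
      rw [mem_preimage, conj_eq_iff_im.2 (by linarith)] at h1
      exact disjoint_left.1 hLR h1 h2
    · exact disjoint_left.1 hLR h1 h2
  have hr₁ : ∀ z ∈ K₁, z.im = 0 → z.re < t := by
    rintro z (h | h) hz
    · exact hLt _ (by rwa [hreal z hz])
    · rw [mem_preimage, conj_eq_iff_im.2 hz] at h
      exact hLt _ (by rwa [hreal z hz])
  have hr₂ : ∀ z ∈ K₂, z.im = 0 → t < z.re := by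
    rintro z (h | h) hz
    · exact hRt _ (by rwa [hreal z hz])
    · rw [mem_preimage, conj_eq_iff_im.2 hz] at h
      exact hRt _ (by rwa [hreal z hz])
  have hn₁ : ∀ z ∈ K₁, ‖z‖ < d := by
    rintro z (h | h)
    · exact hLd _ h
    · simpa using hLd _ h
  have hn₂ : ∀ z ∈ K₂, ‖z‖ < d := by
    rintro z (h | h)
    · exact hRd _ h
    · simpa using hRd _ h
  have cK : IsClosed (K₁ ∪ K₂) := c₁.union c₂
  have htK : (t : ℂ) ∉ K₁ ∪ K₂ := by
    rintro (h | h)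
    · simpa using hr₁ _ h (by simp)
    · simpa using hr₂ _ h (by simp)
  -- reflecting in the real axis reduces to a path in the complement of `K₁ ∪ K₂`
  suffices hJ : JoinedIn (K₁ ∪ K₂)ᶜ (t : ℂ) d by
    have := hJ.map (f := fun z : ℂ => (⟨z.re, |z.im|⟩ : ℂ)) (by
      have : (fun z : ℂ => (⟨z.re, |z.im|⟩ : ℂ)) = fun z => (z.re : ℂ) + (|z.im| : ℝ) * I := by
        ext z; apply Complex.ext <;> simp
      rw [this]; fun_prop)
    have e : ∀ x : ℝ, (⟨(x : ℂ).re, |(x : ℂ).im|⟩ : ℂ) = x := fun x => by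
      apply Complex.ext <;> simp
    simp only [e] at this
    refine this.mono ?_
    rintro _ ⟨z, hz, rfl⟩
    have hz' : (⟨z.re, |z.im|⟩ : ℂ) = z ∨ (⟨z.re, |z.im|⟩ : ℂ) = (starRingEnd ℂ) z := by
      rcases abs_choice z.im with h | h
      · left; apply Complex.ext <;> simp [h]
      · right; apply Complex.ext <;> simp [h]
    refine ⟨abs_nonneg _, fun h => hz (Or.inl ?_), fun h => hz (Or.inr ?_)⟩
    · rcases hz' with h' | h'
      · exact Or.inl (h' ▸ h)
      · exact Or.inr (show (starRingEnd ℂ) z ∈ L by rw [← h']; exact h)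
    · rcases hz' with h' | h'
      · exact Or.inl (h' ▸ h)
      · exact Or.inr (show (starRingEnd ℂ) z ∈ R by rw [← h']; exact h)
  by_contra hJ
  -- a continuous logarithm of `z - t` on `K₁ ∪ K₂`, extended to the plane
  obtain ⟨Γ, hΓ⟩ : ∃ Γ : C(ℂ, ℂ), ∀ z ∈ K₁ ∪ K₂, exp (Γ z) = z - t := by
    let γ : ℂ → ℂ := fun z => if z ∈ K₁ then log (t - z) + Real.pi * I else log (z - t)
    have hγ : ContinuousOn γ (K₁ ∪ K₂) := by
      refine ContinuousOn.union_of_isClosed ?_ ?_ c₁ c₂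
      · have : ContinuousOn (fun z : ℂ => log (t - z) + Real.pi * I) K₁ := by
          refine ContinuousOn.add (ContinuousOn.clog (by fun_prop) fun z hz => ?_)
            continuousOn_const
          rw [mem_slitPlane_iff]
          by_cases h : z.im = 0
          · left; simpa using hr₁ z hz h
          · right; simpa using h
        exact this.congr fun z hz => by simp [γ, hz]
      · have : ContinuousOn (fun z : ℂ => log (z - t)) K₂ := by
          refine ContinuousOn.clog (by fun_prop) fun z hz => ?_
          rw [mem_slitPlane_iff]
          by_cases h : z.im = 0
          · left; simpa using hr₂ z hz h
          · right; simpa using h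
        exact this.congr fun z hz => by
          have : z ∉ K₁ := fun h => hK12 z h hz
          simp [γ, this]
    obtain ⟨Γ, hΓ⟩ := ContinuousMap.exists_restrict_eq cK
      (⟨_, continuousOn_iff_continuous_domRestrict.1 hγ⟩ : C(↥(K₁ ∪ K₂), ℂ))
    refine ⟨Γ, fun z hz => ?_⟩
    have h1 : Γ z = γ z := by simpa using congrArg (fun k => k ⟨z, hz⟩) hΓ
    have hzt : z ≠ t := fun h => htK (h ▸ hz)
    rw [h1]
    by_cases h : z ∈ K₁
    · simp only [γ, h, if_true]
      rw [Complex.exp_add, exp_log (sub_ne_zero.2 hzt.symm), exp_pi_mul_I]; ring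
    · simp only [γ, h, if_false]
      rw [exp_log (sub_ne_zero.2 hzt)]
  set U := pathComponentIn (K₁ ∪ K₂)ᶜ (t : ℂ) with hU
  have hUo : IsOpen U := cK.isOpen_compl.pathComponentIn _
  have htU : (t : ℂ) ∈ U := JoinedIn.refl htK
  have hfr : ∀ z ∈ frontier U, z ∈ K₁ ∪ K₂ := by
    intro z hz
    by_contra hzK
    have hV : IsOpen (pathComponentIn (K₁ ∪ K₂)ᶜ z) := cK.isOpen_compl.pathComponentIn _
    have hzV : z ∈ pathComponentIn (K₁ ∪ K₂)ᶜ z := JoinedIn.refl hzK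
    obtain ⟨w, hw1, hw2⟩ := mem_closure_iff.1 (frontier_subset_closure hz) _ hV hzV
    have hzU : z ∈ U := JoinedIn.trans hw2 (JoinedIn.symm hw1)
    rw [hUo.frontier_eq] at hz
    exact hz.2 hzU
  obtain ⟨Λ, hΛ, hexp⟩ := exists_log (X := ℂ) (F := fun z => if z ∈ U then exp (Γ z) else z - t)
    (Continuous.if (fun z hz => hΓ z (hfr z hz)) (by fun_prop) (by fun_prop)) (fun z => by
      split_ifs with h
      · exact exp_ne_zero _
      · exact sub_ne_zero.2 fun h' => h (h' ▸ htU))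
  -- the circle of radius `d` avoids `K₁ ∪ K₂` and passes through `d`, so it avoids `U`
  have hnorm : ∀ θ : ℝ, ‖(d : ℂ) * exp (θ * I)‖ = d := fun θ => by
    simp [norm_exp_ofReal_mul_I, abs_of_pos hd0]
  have hcirc : ∀ θ : ℝ, (d : ℂ) * exp (θ * I) ∉ U := by
    intro θ hθ
    refine hJ (JoinedIn.trans hθ ?_)
    have hpc : IsPathConnected ((fun θ : ℝ => (d : ℂ) * exp (θ * I)) '' univ) :=
      isPathConnected_univ.image (by fun_prop)
    have := hpc.joinedIn _ ⟨θ, mem_univ _, rfl⟩ _ ⟨0, mem_univ _, rfl⟩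
    simp only [ofReal_zero, zero_mul, Complex.exp_zero, mul_one] at this
    refine this.mono ?_
    rintro _ ⟨φ, -, rfl⟩ (h | h)
    · exact (hn₁ _ h).ne (hnorm φ)
    · exact (hn₂ _ h).ne (hnorm φ)
  have hslit : ∀ θ : ℝ, 1 - (t / d : ℝ) * exp (-θ * I) ∈ slitPlane := by
    intro θ
    rw [mem_slitPlane_iff]; left
    have h1 : ‖((t / d : ℝ) : ℂ) * exp (-θ * I)‖ < 1 := by
      rw [norm_mul, ← ofReal_neg, norm_exp_ofReal_mul_I, norm_real, Real.norm_eq_abs, abs_div,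
        abs_of_pos hd0, mul_one, div_lt_one hd0]
      exact htd
    have h2 := (abs_le.1 (abs_re_le_norm (((t / d : ℝ) : ℂ) * exp (-θ * I)))).2
    rw [sub_re, one_re]; linarith
  have hdc : (d : ℂ) ≠ 0 := by exact_mod_cast hd0.ne'
  have key := log_sub_const (s := univ) isPreconnected_univ
    (f := fun θ : ℝ => Λ (d * exp (θ * I)))
    (g := fun θ : ℝ => θ * I + log d + log (1 - (t / d : ℝ) * exp (-θ * I)))
    (by fun_prop) (ContinuousOn.add (by fun_prop)
      (ContinuousOn.clog (by fun_prop) fun θ _ => hslit θ))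
    (fun θ _ => by
      have h1 : exp (θ * I) * exp (-θ * I) = 1 := by rw [← Complex.exp_add]; simp
      simp only [hexp, hcirc, if_false]
      rw [Complex.exp_add, Complex.exp_add, exp_log hdc, exp_log (slitPlane_ne_zero (hslit θ))]
      rw [neg_mul] at h1 ⊢
      push_cast
      field_simp
      linear_combination (t : ℂ) * h1) (mem_univ 0) (mem_univ (2 * Real.pi))
  have h2 : exp (-(2 * Real.pi) * I) = 1 := by
    rw [neg_mul, Complex.exp_neg, exp_two_pi_mul_I, inv_one]
  push_cast at key
  rw [exp_two_pi_mul_I, h2] at key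
  simp only [zero_mul, Complex.exp_zero, neg_zero] at key
  have : (2 * Real.pi : ℂ) * I = 0 := by linear_combination key
  simp [Real.pi_ne_zero] at this

end OuterString
/-! ### Adjacency, reachability and planar representations -/

namespace OuterString

open Set Relation

variable {V : Type}

/-- `v` lies in the closed neighbourhood of `u`. -/
def Near (G : SimpleGraph V) (u v : V) : Prop := u = v ∨ G.Adj u v

lemma Near.symm {G : SimpleGraph V} {u v : V} (h : Near G u v) : Near G v u :=
  h.imp Eq.symm fun h => h.symm

lemma Near.refl {G : SimpleGraph V} (u : V) : Near G u u := Or.inl rfl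

/-- One step inside `C` (staying put is allowed). -/
def Step (G : SimpleGraph V) (C : Set V) (a b : V) : Prop := a ∈ C ∧ b ∈ C ∧ Near G a b

/-- `b` can be reached from `a` by a walk inside `C`; every vertex reaches itself, even when it
is outside `C`. -/
def Reach (G : SimpleGraph V) (C : Set V) : V → V → Prop := ReflTransGen (Step G C)

lemma Reach.symm {G : SimpleGraph V} {C : Set V} {a b : V} (h : Reach G C a b) :
    Reach G C b a := by
  induction h with
  | refl => exact ReflTransGen.refl
  | tail _ h ih => exact ih.head ⟨h.2.1, h.1, h.2.2.symm⟩

/-- The set `C` induces a connected subgraph (or is empty). -/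
def Conn (G : SimpleGraph V) (C : Set V) : Prop := ∀ p ∈ C, ∀ q ∈ C, Reach G C p q

/-- The component of `r` in the subgraph induced by `X`. -/
def comp (G : SimpleGraph V) (X : Set V) (r : V) : Set V := {y | Reach G X r y}

lemma comp_subset {G : SimpleGraph V} {X : Set V} {r : V} (hr : r ∈ X) : comp G X r ⊆ X := by
  intro y hy
  rcases ReflTransGen.cases_tail hy with h | ⟨_, -, h⟩
  · exact h ▸ hr
  · exact h.2.1

lemma mem_comp_of_near {G : SimpleGraph V} {X : Set V} {r y z : V} (hr : r ∈ X)
    (hy : y ∈ comp G X r) (hz : z ∈ X) (h : Near G y z) : z ∈ comp G X r :=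
  ReflTransGen.tail hy ⟨comp_subset hr hy, hz, h⟩

lemma conn_comp {G : SimpleGraph V} {X : Set V} {r : V} : Conn G (comp G X r) := by
  have key : ∀ y, Reach G X r y → Reach G (comp G X r) r y := by
    intro y hy
    induction hy with
    | refl => exact ReflTransGen.refl
    | tail h1 h2 ih => exact ih.tail ⟨h1, h1.tail h2, h2.2.2⟩
  exact fun p hp q hq => (key p hp).symm.trans (key q hq)

lemma reach_univ {G : SimpleGraph V} (hG : G.Connected) (a b : V) : Reach G univ a b := by
  obtain ⟨w⟩ := hG.preconnected a b
  induction w with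
  | nil => exact ReflTransGen.refl
  | cons h _ ih => exact ReflTransGen.head ⟨mem_univ _, mem_univ _, Or.inr h⟩ ih

/-- An outer-string representation `S` of `G` in the complex plane; `x v` is the base of the
string `S v`, its only real point. -/
structure Rep (G : SimpleGraph V) (S : V → Set ℂ) (x : V → ℝ) : Prop where
  compact : ∀ v, IsCompact (S v)
  conn : ∀ v, IsPathConnected (S v)
  im_nonneg : ∀ v, ∀ z ∈ S v, 0 ≤ z.im
  base_mem : ∀ v, (x v : ℂ) ∈ S v
  base_unique : ∀ v, ∀ y : ℝ, (y : ℂ) ∈ S v → y = x v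
  adj_iff : ∀ u v, G.Adj u v ↔ u ≠ v ∧ (S u ∩ S v).Nonempty

namespace Rep

variable {G : SimpleGraph V} {S : V → Set ℂ} {x : V → ℝ}

lemma near_iff (h : Rep G S x) (u v : V) : Near G u v ↔ (S u ∩ S v).Nonempty := by
  unfold Near
  rw [h.adj_iff]
  by_cases e : u = v
  · subst e
    simp only [true_or, inter_self, true_iff]
    exact ⟨_, h.base_mem u⟩
  · simp [e]

lemma near_of_mem (h : Rep G S x) {u v : V} {z : ℂ} (hu : z ∈ S u) (hv : z ∈ S v) : Near G u v :=
  (h.near_iff u v).2 ⟨z, hu, hv⟩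

lemma near_of_eq (h : Rep G S x) {u v : V} (e : x u = x v) : Near G u v :=
  h.near_of_mem (h.base_mem u) (e ▸ h.base_mem v)

lemma conn_union (h : Rep G S x) {u v : V} (huv : Near G u v) : IsPathConnected (S u ∪ S v) :=
  (h.conn u).union (h.conn v) ((h.near_iff u v).1 huv)

/-- If the bases of the edges `ab` and `cd` alternate, the edges are joined by an edge or share
a vertex. -/
lemma cross_lt (h : Rep G S x) {a b c d : V} (hab : Near G a b) (hcd : Near G c d)
    (h1 : x a < x c) (h2 : x c < x b) (h3 : x b < x d) :
    Near G a c ∨ Near G a d ∨ Near G b c ∨ Near G b d := by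
  obtain ⟨z, hz1 | hz1, hz2 | hz2⟩ := cross (h.conn_union hab) (h.conn_union hcd)
    (by rintro z (hz | hz) <;> exact h.im_nonneg _ _ hz)
    (by rintro z (hz | hz) <;> exact h.im_nonneg _ _ hz) h1 h2 h3
    (Or.inl (h.base_mem a)) (Or.inr (h.base_mem b)) (Or.inl (h.base_mem c)) (Or.inr (h.base_mem d))
  · exact Or.inl (h.near_of_mem hz1 hz2)
  · exact Or.inr (Or.inl (h.near_of_mem hz1 hz2))
  · exact Or.inr (Or.inr (Or.inl (h.near_of_mem hz1 hz2)))
  · exact Or.inr (Or.inr (Or.inr (h.near_of_mem hz1 hz2)))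

/-- An edge `cd` with exactly one base strictly between the bases of an edge `ab` cannot be far
from `ab`. -/
lemma straddle (h : Rep G S x) {a b c d : V} (hab : Near G a b) (hcd : Near G c d)
    (h1 : x a < x c) (h2 : x c < x b) (h3 : ¬ (x a < x d ∧ x d < x b)) :
    Near G a c ∨ Near G a d ∨ Near G b c ∨ Near G b d := by
  rcases lt_trichotomy (x d) (x b) with hd | hd | hd
  · have hda : x d ≤ x a := le_of_not_gt fun h' => h3 ⟨h', hd⟩
    rcases hda.lt_or_eq with hda | hda
    · rcases h.cross_lt hcd.symm hab hda h1 h2 with h' | h' | h' | h'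
      · exact Or.inr (Or.inl h'.symm)
      · exact Or.inr (Or.inr (Or.inr h'.symm))
      · exact Or.inl h'.symm
      · exact Or.inr (Or.inr (Or.inl h'.symm))
    · exact Or.inr (Or.inl (h.near_of_eq hda.symm))
  · exact Or.inr (Or.inr (Or.inr (h.near_of_eq hd.symm)))
  · exact h.cross_lt hab hcd h1 h2 hd

lemma conn_biUnion (h : Rep G S x) {C : Set V} (hC : Conn G C) (hne : C.Nonempty) :
    IsPathConnected (⋃ c ∈ C, S c) := by
  obtain ⟨p, hp⟩ := hne
  have hsub : ∀ c ∈ C, S c ⊆ ⋃ c ∈ C, S c := fun c hc => subset_biUnion_of_mem (u := S) hc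
  refine ⟨x p, hsub p hp (h.base_mem p), ?_⟩
  have key : ∀ c, Reach G C p c → c ∈ C ∧ ∀ z ∈ S c, JoinedIn (⋃ c ∈ C, S c) (x p : ℂ) z := by
    intro c hc
    induction hc with
    | refl => exact ⟨hp, fun z hz => ((h.conn p).joinedIn _ (h.base_mem p) _ hz).mono (hsub p hp)⟩
    | @tail b c _ h2 ih =>
      refine ⟨h2.2.1, fun z hz => ?_⟩
      obtain ⟨w, hw1, hw2⟩ := (h.near_iff b c).1 h2.2.2
      exact (ih.2 w hw1).trans (((h.conn c).joinedIn _ hw2 _ hz).mono (hsub c h2.2.1))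
  intro z hz
  obtain ⟨c, hc, hz⟩ := mem_iUnion₂.1 hz
  exact (key c (hC p hp c hc)).2 z hz

end Rep

/-! ### Uncovered vertices of a connected set -/

/-- The vertex `c` is covered in `C` if some edge of `C` passes over the base of `c` and neither
of its ends is equal or adjacent to `c`. -/
def Covered (G : SimpleGraph V) (x : V → ℝ) (C : Set V) (c : V) : Prop :=
  ∃ r ∈ C, ∃ r' ∈ C, Near G r r' ∧ x r < x c ∧ x c < x r' ∧ ¬ Near G c r ∧ ¬ Near G c r'

/-- The vertices of `C` that are not covered in `C`. -/
def unc (G : SimpleGraph V) (x : V → ℝ) (C : Set V) : Set V := {c ∈ C | ¬ Covered G x C c}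

namespace Rep

variable [Finite V] {G : SimpleGraph V} {S : V → Set ℂ} {x : V → ℝ}

/-- Over every gap between bases of a connected set `C` there passes an edge between uncovered
vertices of `C`. Otherwise `escape` yields a path from far away to the gap that avoids all
uncovered strings; the first string of `C` that it meets would nevertheless be uncovered, because
the path together with this string crosses every edge passing over its base. -/
lemma exists_unc_edge (h : Rep G S x) {C : Set V} (hC : Conn G C) {l p : V} (hl : l ∈ C)
    (hp : p ∈ C) {t : ℝ} (hlt : x l < t) (htp : t < x p) (ht : ∀ c ∈ C, x c ≠ t) :
    ∃ r ∈ unc G x C, ∃ r' ∈ unc G x C, Near G r r' ∧ x r < t ∧ t < x r' := by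
  by_contra hno
  have hcpt : ∀ D : Set V, IsCompact (⋃ c ∈ D, S c) := fun D =>
    D.toFinite.isCompact_biUnion fun c _ => h.compact c
  obtain ⟨d₀, hd₀⟩ := (hcpt univ).isBounded.exists_norm_le
  set d := max d₀ |t| + 1 with hd
  have hdS : ∀ c, ∀ z ∈ S c, ‖z‖ < d := fun c z hz => by
    have := hd₀ z (mem_iUnion₂.2 ⟨c, mem_univ _, hz⟩)
    linarith [le_max_left d₀ |t|]
  have htd : |t| < d := by linarith [le_max_right d₀ |t|]
  have hxd : ∀ c, x c < d := fun c => by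
    have := hdS c _ (h.base_mem c)
    rw [Complex.norm_real, Real.norm_eq_abs] at this
    exact (le_abs_self _).trans_lt this
  have hesc := escape (L := ⋃ c ∈ {c ∈ unc G x C | x c < t}, S c)
    (R := ⋃ c ∈ {c ∈ unc G x C | t < x c}, S c) (t := t) (d := d) (hcpt _) (hcpt _)
    (by
      rw [disjoint_left]
      intro z hz hz'
      obtain ⟨r, hr, hzr⟩ := mem_iUnion₂.1 hz
      obtain ⟨r', hr', hzr'⟩ := mem_iUnion₂.1 hz'
      exact hno ⟨r, hr.1, r', hr'.1, h.near_of_mem hzr hzr', hr.2, hr'.2⟩)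
    (fun z hz => by
      obtain ⟨r, -, hzr⟩ := mem_iUnion₂.1 hz
      exact h.im_nonneg r z hzr)
    (fun z hz => by
      obtain ⟨r, -, hzr⟩ := mem_iUnion₂.1 hz
      exact h.im_nonneg r z hzr)
    (fun y hy => by
      obtain ⟨r, hr, hzr⟩ := mem_iUnion₂.1 hy
      rw [h.base_unique r y hzr]; exact hr.2)
    (fun y hy => by
      obtain ⟨r, hr, hzr⟩ := mem_iUnion₂.1 hy
      rw [h.base_unique r y hzr]; exact hr.2)
    (fun z hz => by
      obtain ⟨r, -, hzr⟩ := mem_iUnion₂.1 hz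
      exact hdS r z hzr)
    (fun z hz => by
      obtain ⟨r, -, hzr⟩ := mem_iUnion₂.1 hz
      exact hdS r z hzr) htd
  obtain ⟨γ, hγ⟩ : ∃ γ : Path (d : ℂ) t, ∀ s, 0 ≤ (γ s).im ∧ ∀ c ∈ unc G x C, γ s ∉ S c := by
    refine ⟨hesc.symm.somePath, fun s => ?_⟩
    have hs := hesc.symm.somePath_mem s
    refine ⟨hs.1, fun c hc hsc => ?_⟩
    rcases (ht c hc.1).lt_or_gt with h' | h'
    · exact hs.2.1 (mem_iUnion₂.2 ⟨c, ⟨hc, h'⟩, hsc⟩)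
    · exact hs.2.2 (mem_iUnion₂.2 ⟨c, ⟨hc, h'⟩, hsc⟩)
  have hcγ : Continuous γ := γ.continuous
  by_cases hmeet : ∃ s, γ s ∈ ⋃ c ∈ C, S c
  · -- the first time the path meets a string of `C`
    have hTc : IsCompact (γ ⁻¹' ⋃ c ∈ C, S c) :=
      ((hcpt C).isClosed.preimage hcγ).isCompact
    obtain ⟨s₀, hs₀, hmin⟩ := hTc.exists_isLeast hmeet
    obtain ⟨c, hc, hsc⟩ := mem_iUnion₂.1 hs₀
    have hcov : Covered G x C c := by
      by_contra hcov
      exact (hγ s₀).2 c ⟨hc, hcov⟩ hsc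
    obtain ⟨r, hr, r', hr', hrr', hrc, hcr', hnr, hnr'⟩ := hcov
    have hQ : IsPathConnected (S c ∪ γ '' Icc 0 s₀) := by
      refine (h.conn c).union ?_ ⟨γ s₀, hsc, s₀, ⟨s₀.2.1, le_rfl⟩, rfl⟩
      have : IsPathConnected (Icc (0 : unitInterval) s₀) := by
        have e : Icc (0 : unitInterval) s₀ = projIcc 0 1 zero_le_one '' Icc (0 : ℝ) s₀ := by
          ext y
          constructor
          · rintro ⟨h1, h2⟩
            exact ⟨y, ⟨y.2.1, h2⟩, projIcc_val _ y⟩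
          · rintro ⟨y, ⟨h1, h2⟩, rfl⟩
            refine ⟨(projIcc (0 : ℝ) 1 zero_le_one y).2.1, ?_⟩
            rw [← projIcc_val zero_le_one s₀]
            exact monotone_projIcc _ h2
        rw [e]
        exact ((convex_Icc _ _).isPathConnected ⟨0, le_rfl, s₀.2.1⟩).image continuous_projIcc
      exact this.image hcγ
    obtain ⟨z, hz1, hz2⟩ := cross (h.conn_union hrr') hQ
      (by rintro z (hz | hz) <;> exact h.im_nonneg _ _ hz)
      (by
        rintro z (hz | ⟨s, -, rfl⟩)
        · exact h.im_nonneg _ _ hz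
        · exact (hγ s).1) hrc hcr' (hxd r') (Or.inl (h.base_mem r)) (Or.inr (h.base_mem r'))
      (Or.inl (h.base_mem c)) (Or.inr ⟨0, ⟨le_rfl, s₀.2.1⟩, by simp⟩)
    have hzc : z ∈ S c := by
      rcases hz2 with hz2 | ⟨s, hs, rfl⟩
      · exact hz2
      · have : γ s ∈ ⋃ c ∈ C, S c := by
          rcases hz1 with hz1 | hz1
          · exact mem_iUnion₂.2 ⟨r, hr, hz1⟩
          · exact mem_iUnion₂.2 ⟨r', hr', hz1⟩
        rw [le_antisymm hs.2 (hmin this)]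
        exact hsc
    rcases hz1 with hz1 | hz1
    · exact hnr (h.near_of_mem hzc hz1)
    · exact hnr' (h.near_of_mem hzc hz1)
  · have : PathConnectedSpace unitInterval := isPathConnected_iff_pathConnectedSpace.1
      ((convex_Icc (0 : ℝ) 1).isPathConnected ⟨0, by simp⟩)
    obtain ⟨z, hz, ⟨s, rfl⟩⟩ := cross (h.conn_biUnion hC ⟨l, hl⟩) (isPathConnected_range hcγ)
      (fun z hz => by
        obtain ⟨r, -, hzr⟩ := mem_iUnion₂.1 hz
        exact h.im_nonneg r z hzr)
      (by rintro _ ⟨s, rfl⟩; exact (hγ s).1) hlt htp (hxd p)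
      (mem_iUnion₂.2 ⟨l, hl, h.base_mem l⟩) (mem_iUnion₂.2 ⟨p, hp, h.base_mem p⟩)
      ⟨1, by simp⟩ ⟨0, by simp⟩
    exact hmeet ⟨s, hz⟩

/-- The leftmost and the rightmost vertex of a connected set `C` are joined by a walk all of whose
vertices are uncovered in `C`. -/
lemma reach_unc (h : Rep G S x) {C : Set V} (hC : Conn G C) {l p : V} (hl : l ∈ C) (hp : p ∈ C)
    (hmin : ∀ c ∈ C, x l ≤ x c) (hmax : ∀ c ∈ C, x c ≤ x p) : Reach G (unc G x C) l p := by
  have hlU : l ∈ unc G x C :=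
    ⟨hl, fun ⟨r, hr, _, _, _, h1, _⟩ => h1.not_ge (hmin r hr)⟩
  have hpU : p ∈ unc G x C :=
    ⟨hp, fun ⟨_, _, r, hr, _, _, h1, _⟩ => h1.not_ge (hmax r hr)⟩
  by_contra hnot
  set A := comp G (unc G x C) l with hA
  have hAU : A ⊆ unc G x C := comp_subset hlU
  have hclosed : ∀ a ∈ A, ∀ b ∈ unc G x C, Near G a b → b ∈ A := fun a ha b hb hab =>
    mem_comp_of_near hlU ha hb hab
  obtain ⟨a, haA, hamax⟩ := A.toFinite.exists_maximalFor x A ⟨l, ReflTransGen.refl⟩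
  have hamax : ∀ b ∈ A, x b ≤ x a := fun b hb => by
    by_contra hlt
    exact hlt (hamax hb (not_le.1 hlt).le)
  have hap : x a < x p := by
    refine (hmax a (hAU haA).1).lt_of_ne fun e => hnot ?_
    exact hclosed a haA p hpU (h.near_of_eq e)
  obtain ⟨b, ⟨hbC, hab⟩, hbmin⟩ :=
    (toFinite {c ∈ C | x a < x c}).exists_minimalFor x _ ⟨p, hp, hap⟩
  have hbmin : ∀ c ∈ C, x a < x c → x b ≤ x c := fun c hc hac => by
    by_contra hlt
    exact hlt (hbmin ⟨hc, hac⟩ (not_le.1 hlt).le)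
  have hle : ∀ c ∈ C, x c < (x a + x b) / 2 → x c ≤ x a := fun c hc h' => by
    by_contra hlt
    have := hbmin c hc (not_le.1 hlt)
    linarith
  obtain ⟨r, hr, r', hr', hrr', h1, h2⟩ := h.exists_unc_edge hC (t := (x a + x b) / 2) hl hp
    (by linarith [hmin a (hAU haA).1]) (by linarith [hbmin p hp hap])
    (fun c hc e => by
      rcases le_or_gt (x c) (x a) with h' | h'
      · linarith
      · linarith [hbmin c hc h'])
  have hr'A : r' ∉ A := fun h' => by linarith [hamax r' h']
  have hrA : r ∉ A := fun h' => hr'A (hclosed r h' r' hr' hrr')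
  have hra : x r < x a :=
    (hle r hr.1 h1).lt_of_ne fun e => hrA (hclosed a haA r hr (h.near_of_eq e.symm))
  have key : ∀ w, Reach G (unc G x C) l w → ¬ (x r < x w ∧ x w < x r') := by
    intro w hw
    induction hw with
    | refl => exact fun h' => h'.1.not_ge (hmin r hr.1)
    | @tail w w' hw hs ih =>
      rintro ⟨h3, h4⟩
      have hwA : w ∈ A := hw
      have hwA' : w' ∈ A := hw.tail hs
      rcases h.straddle hrr' hs.2.2.symm h3 h4 ih with h' | h' | h' | h'
      · exact hrA (hclosed _ hwA' _ hr h'.symm)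
      · exact hrA (hclosed _ hwA _ hr h'.symm)
      · exact hr'A (hclosed _ hwA' _ hr' h'.symm)
      · exact hr'A (hclosed _ hwA _ hr' h'.symm)
  exact key a haA ⟨hra, by linarith⟩

end Rep

end OuterString
/-! ### Winning positions of the game with four cops -/

namespace OuterString

open Set Relation

variable {V : Type}

/-- The cops, at `c` and having the move, can capture the robber at `r`: they have a legal move
such that either they land on the robber, or every answer of the robber is again winning for
the cops. -/
inductive Win (G : SimpleGraph V) : (Fin 4 → V) → V → Prop
  | move (c : Fin 4 → V) (r : V) (c' : Fin 4 → V) (hc : ∀ i, Near G (c i) (c' i))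
      (hr : (∀ i, c' i ≠ r) → ∀ r', Near G r r' → Win G c' r') : Win G c r

/-- The strategy `F`, started at `c`, is legal and captures every robber starting at `r`. -/
def Good (G : SimpleGraph V) (c : Fin 4 → V) (r : V) (F : List V → Fin 4 → V) : Prop :=
  ∀ rob : ℕ → V, RobberLegal G rob → rob 0 = r → CopsLegal G (copSeq c F rob) ∧
    ∃ n i, copSeq c F rob n i = rob n ∨ copSeq c F rob (n + 1) i = rob n

lemma copSeq_const (c : Fin 4 → V) (rob : ℕ → V) (n : ℕ) : copSeq c (fun _ => c) rob n = c := by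
  cases n <;> rfl

/-- From a winning position the cops have a strategy: play the winning move and continue with
a strategy for the position after the robber's answer. -/
lemma Win.exists_good {G : SimpleGraph V} {c : Fin 4 → V} {r : V} (h : Win G c r) :
    ∃ F, Good G c r F := by
  classical
  induction h with
  | move c r c' hc _ ih =>
    -- the continuation: stay put if the robber has been captured already
    have hex : ∀ r', ∃ F : List V → Fin 4 → V, Near G r r' →
        (∀ rob, RobberLegal G rob → rob 0 = r' → CopsLegal G (copSeq c' F rob)) ∧
        ((∀ i, c' i ≠ r) → Good G c' r' F) := by
      intro r'
      by_cases hcap : ∀ i, c' i ≠ r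
      · by_cases hn : Near G r r'
        · obtain ⟨F, hF⟩ := ih hcap r' hn
          exact ⟨F, fun _ => ⟨fun rob h1 h2 => (hF rob h1 h2).1, fun _ => hF⟩⟩
        · exact ⟨fun _ => c', fun h' => absurd h' hn⟩
      · refine ⟨fun _ => c', fun _ => ⟨fun rob _ _ n i => ?_, fun h' => absurd h' hcap⟩⟩
        simp [copSeq_const]
    choose F hF using hex
    let F' : List V → Fin 4 → V := fun l => match l with
      | _ :: r' :: t => F r' (r' :: t)
      | _ => c'
    refine ⟨F', fun rob hrob h0 => ?_⟩
    have hnear : Near G r (rob 1) := by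
      rcases hrob 0 with h | h
      · exact Or.inl (by rw [← h0, ← h])
      · exact Or.inr (h0 ▸ h)
    have hshift : ∀ n, copSeq c F' rob (n + 1) =
        copSeq c' (F (rob 1)) (fun m => rob (m + 1)) n := by
      intro n
      cases n with
      | zero => simp [copSeq, F']
      | succ n =>
        simp only [copSeq]
        rw [List.range_succ_eq_map, List.range_succ_eq_map]
        simp [F', Function.comp_def]
    have hrob' : RobberLegal G (fun m => rob (m + 1)) := fun n => hrob (n + 1)
    obtain ⟨hlegal, hgood⟩ := hF (rob 1) hnear
    refine ⟨fun n i => ?_, ?_⟩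
    · cases n with
      | zero =>
        rw [hshift]
        exact (hc i).imp Eq.symm id
      | succ n =>
        rw [hshift, hshift]
        exact hlegal _ hrob' rfl n i
    · by_cases hcap : ∀ i, c' i ≠ r
      · obtain ⟨n, i, hi⟩ := (hgood hcap _ hrob' rfl).2
        refine ⟨n + 1, i, ?_⟩
        rw [hshift, hshift]
        exact hi
      · push Not at hcap
        obtain ⟨i, hi⟩ := hcap
        refine ⟨0, i, Or.inr ?_⟩
        rw [hshift, h0]
        exact hi

lemma copWin_of_win {G : SimpleGraph V} (c : Fin 4 → V) (h : ∀ r, Win G c r) : CopWin G 4 := by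
  choose F hF using fun r => (h r).exists_good
  refine ⟨c, fun l => match l with
    | [] => c
    | r :: t => F r (r :: t), fun rob hrob => ?_⟩
  have e : copSeq c (fun l => match l with
      | [] => c
      | r :: t => F r (r :: t)) rob = copSeq c (F (rob 0)) rob := by
    funext n
    cases n with
    | zero => rfl
    | succ n =>
      simp only [copSeq]
      rw [List.range_succ_eq_map]
      simp
  rw [e]
  exact hF (rob 0) rob hrob rfl

lemma Win.perm {G : SimpleGraph V} {c : Fin 4 → V} {r : V} (h : Win G c r)
    (π : Equiv.Perm (Fin 4)) : Win G (c ∘ π) r := by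
  induction h with
  | move c r c' hc _ ih =>
    exact Win.move _ _ (c' ∘ π) (fun i => hc (π i)) fun h' =>
      ih fun i => by simpa using h' (π.symm i)

/-- A robber next to a cop is captured at once. -/
lemma win_of_near {G : SimpleGraph V} {c : Fin 4 → V} {r : V} (i : Fin 4) (h : Near G (c i) r) :
    Win G c r := by
  classical
  refine Win.move _ _ (Function.update c i r) (fun j => ?_) fun h' => absurd (by simp) (h' i)
  by_cases hj : j = i
  · subst hj; simpa using h
  · simp [hj, Near.refl]

/-! ### Guarding two vertices -/

/-- Two cops at `u` and `v` confine the robber to the connected set `C`: all neighbours of `C`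
outside `C` are equal or adjacent to `u` or `v`. Moreover the bases of `u` and `v` do not lie
between bases of vertices of `C`. -/
structure Confined (G : SimpleGraph V) (x : V → ℝ) (u v : V) (C : Set V) : Prop where
  conn : Conn G C
  far₁ : ∀ c ∈ C, ¬ Near G u c
  far₂ : ∀ c ∈ C, ¬ Near G v c
  guard : ∀ r ∈ C, ∀ r', Near G r r' → r' ∈ C ∨ Near G u r' ∨ Near G v r'
  out₁ : ∀ p ∈ C, ∀ q ∈ C, ¬ (x p < x u ∧ x u < x q)
  out₂ : ∀ p ∈ C, ∀ q ∈ C, ¬ (x p < x v ∧ x v < x q)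

namespace Confined

variable {G : SimpleGraph V} {x : V → ℝ} {u v : V} {C : Set V}

/-- While the robber is confined, the two free cops may move, and only robber moves inside `C`
that are not next to the new positions of the free cops matter. -/
lemma step (h : Confined G x u v C) {a b a' b' r : V} (ha : Near G a a') (hb : Near G b b')
    (hr : r ∈ C) (hw : ∀ r' ∈ C, Near G r r' → ¬ Near G a' r' → ¬ Near G b' r' →
      Win G ![u, v, a', b'] r') : Win G ![u, v, a, b] r := by
  refine Win.move _ _ ![u, v, a', b'] (fun i => ?_) fun _ r' hrr' => ?_
  · fin_cases i
    · exact Near.refl _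
    · exact Near.refl _
    · exact ha
    · exact hb
  · by_cases hna : Near G a' r'
    · exact win_of_near 2 hna
    by_cases hnb : Near G b' r'
    · exact win_of_near 3 hnb
    rcases h.guard r hr r' hrr' with h' | h' | h'
    · exact hw r' h' hrr' hna hnb
    · exact win_of_near 0 h'
    · exact win_of_near 1 h'

/-- The free cops can walk to any vertices `a'` and `b'`. -/
lemma walk (h : Confined G x u v C) (hG : G.Connected) {a b a' b' : V}
    (hw : ∀ r ∈ C, Win G ![u, v, a', b'] r) : ∀ r ∈ C, Win G ![u, v, a, b] r := by
  have h1 : ∀ r ∈ C, Win G ![u, v, a, b'] r := by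
    induction reach_univ hG a a' using ReflTransGen.head_induction_on with
    | refl => exact hw
    | head hs _ ih =>
      exact fun r hr => h.step hs.2.2 (Near.refl _) hr fun r' hr' _ _ _ => ih r' hr'
  induction reach_univ hG b b' using ReflTransGen.head_induction_on with
  | refl => exact h1
  | head hs _ ih =>
    exact fun r hr => h.step (Near.refl _) hs.2.2 hr fun r' hr' _ _ _ => ih r' hr'

/-- If the robber at `r` is locked in strictly between the adjacent uncovered vertices `c` and
`c'`, then cops at `c` and `c'` confine it to a smaller set. -/
lemma shrink [Finite V] {S : V → Set ℂ} (hS : Rep G S x) (h : Confined G x u v C) {c c' r : V}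
    (hc : c ∈ C) (hc' : c' ∈ C) (hcc' : Near G c c') (hr : r ∈ C) (hcr : ¬ Near G c r)
    (hcr' : ¬ Near G c' r) (h1 : x c < x r) (h2 : x r < x c') :
    ∃ K, Confined G x c c' K ∧ r ∈ K ∧ K.ncard < C.ncard := by
  set X : Set V := {y | ¬ Near G c y ∧ ¬ Near G c' y} with hX
  have hrX : r ∈ X := ⟨hcr, hcr'⟩
  have hKX : comp G X r ⊆ X := comp_subset hrX
  have hbetween : ∀ y ∈ comp G X r, x c < x y ∧ x y < x c' := by
    intro y hy
    induction hy with
    | refl => exact ⟨h1, h2⟩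
    | tail _ hs ih =>
      by_contra hno
      rcases hS.straddle hcc' hs.2.2 ih.1 ih.2 hno with h' | h' | h' | h'
      · exact hs.1.1 h'
      · exact hs.2.1.1 h'
      · exact hs.1.2 h'
      · exact absurd h' hs.2.1.2
  -- leaving `C` would need a vertex next to `u` or `v`, whose bases are not between `c` and `c'`
  have hKC : ∀ y ∈ comp G X r, y ∈ C := by
    intro y hy
    induction hy with
    | refl => exact hr
    | @tail y y' hy hs ih =>
      have hb := hbetween y' (hy.tail hs)
      rcases h.guard y ih y' hs.2.2 with h' | h' | h'
      · exact h'
      · rcases hS.straddle hcc' h'.symm hb.1 hb.2 (h.out₁ c hc c' hc') with h' | h' | h' | h'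
        · exact absurd h' hs.2.1.1
        · exact absurd h'.symm (h.far₁ c hc)
        · exact absurd h' hs.2.1.2
        · exact absurd h'.symm (h.far₁ c' hc')
      · rcases hS.straddle hcc' h'.symm hb.1 hb.2 (h.out₂ c hc c' hc') with h' | h' | h' | h'
        · exact absurd h' hs.2.1.1
        · exact absurd h'.symm (h.far₂ c hc)
        · exact absurd h' hs.2.1.2
        · exact absurd h'.symm (h.far₂ c' hc')
  refine ⟨comp G X r, ⟨conn_comp, fun y hy => (hKX hy).1, fun y hy => (hKX hy).2, ?_, ?_, ?_⟩,
    ReflTransGen.refl, ?_⟩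
  · intro y hy y' hyy'
    by_cases hy' : y' ∈ X
    · exact Or.inl (mem_comp_of_near hrX hy hy' hyy')
    · right
      by_contra hno
      exact hy' ⟨fun h' => hno (Or.inl h'), fun h' => hno (Or.inr h')⟩
  · exact fun p hp q _ h' => lt_asymm h'.1 (hbetween p hp).1
  · exact fun p _ q hq h' => lt_asymm h'.2 (hbetween q hq).2
  · refine ncard_lt_ncard ⟨hKC, fun hsub => ?_⟩ C.toFinite
    exact (hKX (hsub hc)).1 (Near.refl c)

/-- Four cops, two of which confine the robber, win: the two free cops sweep along a walk of
uncovered vertices from the leftmost to the rightmost vertex of `C`, keeping the robber to their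
right, until the robber is locked in between two consecutive vertices of the walk. -/
lemma win [Finite V] {S : V → Set ℂ} (hS : Rep G S x) (hG : G.Connected) :
    ∀ (n : ℕ) (u v : V) (C : Set V), C.ncard = n → Confined G x u v C →
      ∀ r ∈ C, ∀ a b, Win G ![u, v, a, b] r := by
  intro n
  induction n using Nat.strong_induction_on with
  | _ n IH =>
  intro u v C hsize h r hr a b
  obtain ⟨l, hl, hlmin₀⟩ := C.toFinite.exists_minimalFor x C ⟨r, hr⟩
  obtain ⟨p, hp, hpmax⟩ := C.toFinite.exists_maximalFor x C ⟨r, hr⟩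
  have hlmin : ∀ c ∈ C, x l ≤ x c := fun c hc => by
    by_contra hlt
    exact hlt (hlmin₀ hc (not_le.1 hlt).le)
  have hpmax : ∀ c ∈ C, x c ≤ x p := fun c hc => by
    by_contra hlt
    exact hlt (hpmax hc (not_le.1 hlt).le)
  -- the robber cannot pass an uncovered vertex occupied by a cop without being caught
  have hpass : ∀ c ∈ unc G x C, ∀ r ∈ C, ∀ r' ∈ C, Near G r r' → x c < x r → ¬ Near G c r →
      ¬ Near G c r' → x c < x r' := by
    intro c hc r hr r' hr' hrr' hlt hn hn'
    by_contra hle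
    have hlt' : x r' < x c := (not_lt.1 hle).lt_of_ne fun e => hn' (hS.near_of_eq e.symm)
    exact hc.2 ⟨r', hr', r, hr, hrr'.symm, hlt', hlt, hn', hn⟩
  have sweep : ∀ r ∈ C, x l < x r → Win G ![u, v, l, l] r := by
    have hreach := hS.reach_unc h.conn hl hp hlmin hpmax
    clear hl hlmin₀ hlmin
    induction hreach using ReflTransGen.head_induction_on with
    | refl => exact fun r hr hlt => absurd (hpmax r hr) hlt.not_ge
    | @head c c' hs _ ih =>
      intro r hr hlt
      obtain ⟨hc, hc', hcc'⟩ := hs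
      by_cases hcr : Near G c r
      · exact win_of_near 2 hcr
      refine h.step (Near.refl c) hcc' hr fun r' hr' hrr' hn hn' => ?_
      have hcr' := hpass c hc r hr r' hr' hrr' hlt hcr hn
      rcases lt_trichotomy (x r') (x c') with hlt' | heq | hlt'
      · obtain ⟨K, hK, hrK, hcard⟩ := h.shrink hS hc.1 hc'.1 hcc' hr' hn hn' hcr' hlt'
        have hwin := (IH _ (hsize ▸ hcard) c c' K rfl hK r' hrK u v).perm
          (Equiv.swap 0 2 * Equiv.swap 1 3)
        have e : ![c, c', u, v] ∘ (Equiv.swap 0 2 * Equiv.swap 1 3 : Equiv.Perm (Fin 4)) =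
            ![u, v, c, c'] := by
          funext i; fin_cases i <;> rfl
        rwa [e] at hwin
      · exact absurd (hS.near_of_eq heq.symm) hn'
      · refine h.step hcc' (Near.refl c') hr' fun r'' hr'' hrr'' hn'' _ => ?_
        exact ih r'' hr'' (hpass c' hc' r' hr' r'' hr'' hrr'' hlt' hn' hn'')
  refine h.walk hG (a' := l) (b' := l) (fun r hr => ?_) r hr
  rcases (hlmin r hr).lt_or_eq with hlt | heq
  · exact sweep r hr hlt
  · exact win_of_near 2 (hS.near_of_eq heq)

end Confined

/-- Four cops starting at the vertex with the leftmost base win. -/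
lemma Rep.copWin [Finite V] {G : SimpleGraph V} {S : V → Set ℂ} {x : V → ℝ} (hS : Rep G S x)
    (hG : G.Connected) : CopWin G 4 := by
  have := hG.nonempty
  obtain ⟨u, hu⟩ := Finite.exists_min x
  refine copWin_of_win ![u, u, u, u] fun r => ?_
  by_cases hr : Near G u r
  · exact win_of_near 0 hr
  have hrX : r ∈ {y | ¬ Near G u y} := hr
  have hout : ∀ p q : V, ¬ (x p < x u ∧ x u < x q) := fun p _ h => h.1.not_ge (hu p)
  refine Confined.win hS hG _ u u (comp G {y | ¬ Near G u y} r) rfl ?_ r ReflTransGen.refl u u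
  refine ⟨conn_comp, fun c hc => comp_subset hrX hc, fun c hc => comp_subset hrX hc, ?_,
    fun p _ q _ => hout p q, fun p _ q _ => hout p q⟩
  intro y hy y' hyy'
  by_cases hy' : Near G u y'
  · exact Or.inr (Or.inl hy')
  · exact Or.inl (mem_comp_of_near hrX hy hy' hyy')

/-- Transport of an outer-string representation to the complex plane. -/
lemma exists_rep {G : SimpleGraph V} {S : V → Set (ℝ × ℝ)} (hS : ∀ v, IsOuterString (S v))
    (hadj : ∀ u v, G.Adj u v ↔ u ≠ v ∧ (S u ∩ S v).Nonempty) :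
    ∃ (T : V → Set ℂ) (x : V → ℝ), Rep G T x := by
  choose f hf hSf him e _ he using hS
  have he0 : ∀ v, e v ∈ S v ∧ (e v).2 = 0 := fun v => by
    have : e v ∈ {p : ℝ × ℝ | p ∈ S v ∧ p.2 = 0} := by rw [he v]; rfl
    exact this
  have hcont : Continuous Complex.equivRealProdCLM.symm :=
    Complex.equivRealProdCLM.symm.continuous
  have himg : ∀ v, ((Complex.equivRealProdCLM.symm '' S v : Set ℂ)) =
      (fun t => Complex.equivRealProdCLM.symm (f v t)) '' Icc 0 1 := fun v => by
    rw [hSf v, image_image]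
  have hcf : ∀ v, ContinuousOn (fun t => Complex.equivRealProdCLM.symm (f v t)) (Icc (0 : ℝ) 1) :=
    fun v => hcont.comp_continuousOn (hf v)
  have hmem : ∀ v (y : ℝ), (y : ℂ) ∈ Complex.equivRealProdCLM.symm '' S v ↔ (y, (0 : ℝ)) ∈ S v := by
    intro v y
    have : (y : ℂ) = Complex.equivRealProdCLM.symm (y, (0 : ℝ)) := by
      apply Complex.ext <;> simp
    rw [this, Complex.equivRealProdCLM.symm.injective.mem_set_image]
  refine ⟨fun v => Complex.equivRealProdCLM.symm '' S v, fun v => (e v).1, ?_, ?_, ?_, ?_, ?_, ?_⟩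
  · intro v
    rw [himg]
    exact isCompact_Icc.image_of_continuousOn (hcf v)
  · intro v
    rw [himg]
    exact ((convex_Icc (0 : ℝ) 1).isPathConnected ⟨0, by simp⟩).image' (hcf v)
  · rintro v _ ⟨p, hp, rfl⟩
    simpa using him v p hp
  · intro v
    rw [hmem]
    have := he0 v
    rw [← this.2]
    exact this.1
  · intro v y hy
    rw [hmem] at hy
    have : (y, (0 : ℝ)) ∈ {p : ℝ × ℝ | p ∈ S v ∧ p.2 = 0} := ⟨hy, rfl⟩
    rw [he v, mem_singleton_iff] at this
    rw [← this]
  · intro u v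
    rw [hadj, ← image_inter Complex.equivRealProdCLM.symm.injective, image_nonempty]

end OuterString

/-- Every finite connected outer-string graph has cop number at most 4. -/
theorem copNumber_outerString_le_four (V : Type) [Fintype V] (G : SimpleGraph V)
    (hconn : G.Connected)
    (hrep : ∃ S : V → Set (ℝ × ℝ), (∀ v, IsOuterString (S v)) ∧
      ∀ u v, G.Adj u v ↔ u ≠ v ∧ (S u ∩ S v).Nonempty) :
    copNumber G ≤ 4 := by
  obtain ⟨S, hS, hadj⟩ := hrep
  obtain ⟨T, x, hT⟩ := OuterString.exists_rep hS hadj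
  exact Nat.sInf_le (hT.copWin hconn)
end

section
/- The Cartesian product of cycles C_3 □ C_5 (the 3-by-5 toroidal grid) is an outer-string graph, and its cop number is at least 3. -/
/-! ### Polygonal lines with lattice vertices -/

/-- A lattice point viewed in the real plane. -/
def latticePt (p : ℕ × ℕ) : ℝ × ℝ := (p.1, p.2)

/-- The polygonal line with successive vertices `p` and the entries of the list. -/
def polyline : ℕ × ℕ → List (ℕ × ℕ) → Set (ℝ × ℝ)
  | p, [] => {latticePt p}
  | p, q :: l => segment ℝ (latticePt p) (latticePt q) ∪ polyline q l

/-- The edges of the polygonal line `polyline p l`, the last vertex counting as a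
degenerate edge. -/
def polyEdges : ℕ × ℕ → List (ℕ × ℕ) → List ((ℕ × ℕ) × (ℕ × ℕ))
  | p, [] => [(p, p)]
  | p, q :: l => (p, q) :: polyEdges q l

/-- The bounding boxes of the two lattice segments `e` and `f` are disjoint. -/
def BoxSep (e f : (ℕ × ℕ) × (ℕ × ℕ)) : Prop :=
  max e.1.1 e.2.1 < min f.1.1 f.2.1 ∨ max f.1.1 f.2.1 < min e.1.1 e.2.1 ∨
  max e.1.2 e.2.2 < min f.1.2 f.2.2 ∨ max f.1.2 f.2.2 < min e.1.2 e.2.2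

instance (e f : (ℕ × ℕ) × (ℕ × ℕ)) : Decidable (BoxSep e f) := by
  unfold BoxSep; infer_instance

lemma exists_path_polyline (p : ℕ × ℕ) (l : List (ℕ × ℕ)) :
    ∃ (b : ℝ × ℝ) (γ : Path (latticePt p) b), Set.range γ = polyline p l := by
  induction l generalizing p with
  | nil => exact ⟨_, Path.refl _, by simp [polyline]⟩
  | cons q l ih =>
    obtain ⟨b, γ, hγ⟩ := ih q
    refine ⟨b, (Path.segment (latticePt p) (latticePt q)).trans γ, ?_⟩
    rw [Path.trans_range, hγ, Path.range_segment]
    rfl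

lemma left_mem_polyline (p : ℕ × ℕ) (l : List (ℕ × ℕ)) : latticePt p ∈ polyline p l := by
  cases l with
  | nil => simp [polyline]
  | cons q l => exact Or.inl (left_mem_segment ℝ _ _)

lemma mem_polyline_of_mem {p w : ℕ × ℕ} {l : List (ℕ × ℕ)} (hw : w ∈ l) :
    latticePt w ∈ polyline p l := by
  induction l generalizing p with
  | nil => simp at hw
  | cons q l ih =>
    rcases List.mem_cons.1 hw with rfl | hw
    · exact Or.inr (left_mem_polyline _ _)
    · exact Or.inr (ih hw)

lemma exists_edge_of_mem_polyline {p : ℕ × ℕ} {l : List (ℕ × ℕ)} {x : ℝ × ℝ}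
    (hx : x ∈ polyline p l) :
    ∃ e ∈ polyEdges p l, x ∈ segment ℝ (latticePt e.1) (latticePt e.2) := by
  induction l generalizing p with
  | nil =>
    refine ⟨(p, p), by simp [polyEdges], ?_⟩
    rw [segment_same]
    exact hx
  | cons q l ih =>
    rcases hx with hx | hx
    · exact ⟨(p, q), by simp [polyEdges], hx⟩
    · obtain ⟨e, he, hxe⟩ := ih hx
      exact ⟨e, by simp [polyEdges, he], hxe⟩

lemma mem_box_of_mem_segment {p q : ℕ × ℕ} {x : ℝ × ℝ}
    (hx : x ∈ segment ℝ (latticePt p) (latticePt q)) :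
    ((min p.1 q.1 : ℕ) : ℝ) ≤ x.1 ∧ x.1 ≤ (max p.1 q.1 : ℕ) ∧
    ((min p.2 q.2 : ℕ) : ℝ) ≤ x.2 ∧ x.2 ≤ (max p.2 q.2 : ℕ) := by
  have h := Prod.segment_subset _ _ hx
  rw [Set.mem_prod, segment_eq_uIcc, segment_eq_uIcc] at h
  push_cast
  exact ⟨h.1.1, h.1.2, h.2.1, h.2.2⟩

lemma disjoint_of_boxSep {e f : (ℕ × ℕ) × (ℕ × ℕ)} (h : BoxSep e f) {x : ℝ × ℝ}
    (he : x ∈ segment ℝ (latticePt e.1) (latticePt e.2))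
    (hf : x ∈ segment ℝ (latticePt f.1) (latticePt f.2)) : False := by
  obtain ⟨e1, e2, e3, e4⟩ := mem_box_of_mem_segment he
  obtain ⟨f1, f2, f3, f4⟩ := mem_box_of_mem_segment hf
  rcases h with h | h | h | h
  · exact absurd (f1.trans e2) (not_le.2 (Nat.cast_lt.2 h))
  · exact absurd (e1.trans f2) (not_le.2 (Nat.cast_lt.2 h))
  · exact absurd (f3.trans e4) (not_le.2 (Nat.cast_lt.2 h))
  · exact absurd (e3.trans f4) (not_le.2 (Nat.cast_lt.2 h))

lemma one_le_snd_of_mem_polyline {p : ℕ × ℕ} {l : List (ℕ × ℕ)} (hp : 1 ≤ p.2)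
    (hl : ∀ q ∈ l, 1 ≤ q.2) {x : ℝ × ℝ} (hx : x ∈ polyline p l) : 1 ≤ x.2 := by
  induction l generalizing p with
  | nil =>
    rw [polyline, Set.mem_singleton_iff] at hx
    subst hx
    exact Nat.one_le_cast.2 hp
  | cons q l ih =>
    have hq : 1 ≤ q.2 := hl q (by simp)
    rcases hx with hx | hx
    · exact (Nat.one_le_cast.2 (le_min hp hq)).trans (mem_box_of_mem_segment hx).2.2.1
    · exact ih hq (fun r hr => hl r (by simp [hr])) hx

/-- A polygonal line that leaves the `x`-axis by a vertical unit edge and then stays at height at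
least `1` is an outer-string. -/
lemma isOuterString_polyline (a : ℕ) (l : List (ℕ × ℕ)) (hl : ∀ q ∈ l, 1 ≤ q.2) :
    IsOuterString (polyline (a, 0) ((a, 1) :: l)) := by
  obtain ⟨b, γ, hγ⟩ := exists_path_polyline (a, 0) ((a, 1) :: l)
  have hrest : ∀ x ∈ polyline (a, 1) l, (1 : ℝ) ≤ x.2 := fun x hx =>
    one_le_snd_of_mem_polyline le_rfl hl hx
  refine ⟨γ.extend, γ.continuous_extend.continuousOn, ?_, ?_, latticePt (a, 0), ?_, ?_⟩
  · rw [← hγ, Path.image_extend_of_subset γ subset_rfl]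
  · rintro x (hx | hx)
    · exact (Nat.cast_nonneg _).trans (mem_box_of_mem_segment hx).2.2.1
    · exact zero_le_one.trans (hrest x hx)
  · exact Or.inl γ.extend_zero.symm
  · ext x
    constructor
    · rintro ⟨hx | hx, hx0⟩
      · obtain ⟨h1, h2, -, -⟩ := mem_box_of_mem_segment hx
        simp only [min_self, max_self] at h1 h2
        refine Prod.ext (le_antisymm h2 h1) ?_
        simpa [latticePt] using hx0
      · have := hrest x hx
        rw [hx0] at this
        norm_num at this
    · rintro rfl
      exact ⟨left_mem_polyline _ _, by simp [latticePt]⟩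

/-! ### The outer-string representation -/

/-- The abscissa of the ground point of the strings of column `j`. -/
def groundX (v : Fin 3 × Fin 5) : ℕ := 2 * v.2

/-- The vertices, after the ground point and the point at height `1` above it, of the string
representing `v`.  The arms are traversed back and forth. -/
def stringTail (v : Fin 3 × Fin 5) : List (ℕ × ℕ) :=
  let h : ℕ := v.1 + 1
  let x : ℕ := 2 * v.2
  if v.2 = 0 then [(0, h), (1, h), (0, h), (0, 4), (10, 4), (10, h), (9, h)]
  else [(x, h), (x - 1, h), (x + 1, h)]

/-- All vertices of the string representing `v` except the ground point. -/
def stringVerts (v : Fin 3 × Fin 5) : List (ℕ × ℕ) := (groundX v, 1) :: stringTail v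

/-- The string representing `v`. -/
def toroidalString (v : Fin 3 × Fin 5) : Set (ℝ × ℝ) := polyline (groundX v, 0) (stringVerts v)

/-- Adjacency in `C₃ □ C₅` in arithmetic form, suited to evaluation. -/
def ToroidalAdj (u v : Fin 3 × Fin 5) : Prop :=
  ((u.1 - v.1 = 1 ∨ v.1 - u.1 = 1) ∧ u.2 = v.2) ∨ ((u.2 - v.2 = 1 ∨ v.2 - u.2 = 1) ∧ u.1 = v.1)

instance (u v : Fin 3 × Fin 5) : Decidable (ToroidalAdj u v) := by
  unfold ToroidalAdj; infer_instance

lemma toroidalAdj_iff (u v : Fin 3 × Fin 5) :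
    (SimpleGraph.cycleGraph 3 □ SimpleGraph.cycleGraph 5).Adj u v ↔ ToroidalAdj u v := by
  rw [SimpleGraph.boxProd_adj, SimpleGraph.cycleGraph_adj, SimpleGraph.cycleGraph_adj]
  rfl

/-- Strings of adjacent vertices share a polygon vertex; strings of distinct non-adjacent vertices
have edges with pairwise disjoint bounding boxes. -/
lemma toroidal_contacts : ∀ u v : Fin 3 × Fin 5,
    (ToroidalAdj u v → u ≠ v ∧ ∃ w ∈ stringVerts u, w ∈ stringVerts v) ∧
    (¬ ToroidalAdj u v → u = v ∨
      ∀ e ∈ polyEdges (groundX u, 0) (stringVerts u),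
        ∀ f ∈ polyEdges (groundX v, 0) (stringVerts v), BoxSep e f) := by
  decide +kernel

lemma isOuterString_toroidalString (v : Fin 3 × Fin 5) : IsOuterString (toroidalString v) := by
  have h : ∀ v : Fin 3 × Fin 5, ∀ q ∈ stringTail v, 1 ≤ q.2 := by decide +kernel
  exact isOuterString_polyline _ _ (h v)

lemma toroidalString_inter (u v : Fin 3 × Fin 5) :
    ToroidalAdj u v ↔ u ≠ v ∧ (toroidalString u ∩ toroidalString v).Nonempty := by
  constructor
  · intro h
    obtain ⟨hne, w, hu, hv⟩ := (toroidal_contacts u v).1 h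
    exact ⟨hne, latticePt w, mem_polyline_of_mem hu, mem_polyline_of_mem hv⟩
  · rintro ⟨hne, x, hu, hv⟩
    by_contra h
    obtain ⟨e, he, hxe⟩ := exists_edge_of_mem_polyline hu
    obtain ⟨f, hf, hxf⟩ := exists_edge_of_mem_polyline hv
    exact disjoint_of_boxSep ((((toroidal_contacts u v).2 h).resolve_left hne) e he f hf) hxe hxf

/-! ### Evading two cops -/

/-- The robber's play as a list of positions: `esc` chooses his next vertex from his present one
and the cops' reply to the history. -/
def robberHist {V : Type*} {k : ℕ} (F : List V → Fin k → V) (esc : V → (Fin k → V) → V)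
    (r₀ : V) : ℕ → List V × V
  | 0 => ([r₀], r₀)
  | n + 1 =>
    let s := robberHist F esc r₀ n
    (s.1 ++ [esc s.2 (F s.1)], esc s.2 (F s.1))

lemma robberHist_fst {V : Type*} {k : ℕ} (F : List V → Fin k → V) (esc : V → (Fin k → V) → V)
    (r₀ : V) (n : ℕ) : (robberHist F esc r₀ n).1 =
      (List.range (n + 1)).map fun m => (robberHist F esc r₀ m).2 := by
  induction n with
  | zero => rfl
  | succ n ih =>
    rw [List.range_succ, List.map_append, ← ih]
    rfl

/-- If the robber can always start undominated, and can always become undominated by one move when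
no cop stands on his vertex, then the cops have no winning strategy. -/
lemma not_copWin_of_escape {V : Type*} {k : ℕ} (G : SimpleGraph V)
    (hstart : ∀ c : Fin k → V, ∃ r, ∀ i, r ≠ c i ∧ ¬ G.Adj (c i) r)
    (hescape : ∀ (r : V) (c : Fin k → V), (∀ i, c i ≠ r) →
      ∃ r', (r' = r ∨ G.Adj r r') ∧ ∀ i, r' ≠ c i ∧ ¬ G.Adj (c i) r') :
    ¬ CopWin G k := by
  rintro ⟨init, F, hF⟩
  -- A total escape function: when already caught, the robber stays, so that his trajectory is
  -- legal before anything is known about the cops' moves.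
  have htotal : ∀ (r : V) (c : Fin k → V), ∃ r', (r' = r ∨ G.Adj r r') ∧
      ((∀ i, c i ≠ r) → ∀ i, r' ≠ c i ∧ ¬ G.Adj (c i) r') := by
    intro r c
    by_cases h : ∀ i, c i ≠ r
    · obtain ⟨r', h1, h2⟩ := hescape r c h
      exact ⟨r', h1, fun _ => h2⟩
    · exact ⟨r, Or.inl rfl, fun h' => absurd h' h⟩
  choose esc hmove hsafe using htotal
  obtain ⟨r₀, hr₀⟩ := hstart init
  let rob : ℕ → V := fun n => (robberHist F esc r₀ n).2
  obtain ⟨hcops, n, i, hcap⟩ := hF rob fun n => hmove _ _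
  have hcop : ∀ n, copSeq init F rob (n + 1) = F (robberHist F esc r₀ n).1 := by
    intro n
    rw [robberHist_fst]
    rfl
  have hstep : ∀ n, (∀ i, rob n ≠ copSeq init F rob n i ∧ ¬ G.Adj (copSeq init F rob n i) (rob n)) →
      ∀ i, copSeq init F rob (n + 1) i ≠ rob n := by
    intro n hn i heq
    rcases hcops n i with h | h
    · exact (hn i).1 (heq.symm.trans h)
    · exact (hn i).2 (heq ▸ h)
  have hinv : ∀ n i, rob n ≠ copSeq init F rob n i ∧ ¬ G.Adj (copSeq init F rob n i) (rob n) := by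
    intro n
    induction n with
    | zero => exact hr₀
    | succ n ih =>
      have h := hstep n ih
      rw [hcop] at h ⊢
      exact hsafe _ _ h
  rcases hcap with h | h
  · exact (hinv n i).1 h.symm
  · exact hstep n (hinv n) i h

lemma exists_undominated : ∀ a b : Fin 3 × Fin 5, ∃ r,
    (r ≠ a ∧ ¬ ToroidalAdj a r) ∧ (r ≠ b ∧ ¬ ToroidalAdj b r) := by
  decide +kernel

/-- Two cops away from `r` do not dominate its closed neighbourhood. -/
lemma exists_escape : ∀ r a b : Fin 3 × Fin 5, a ≠ r → b ≠ r →
    ∃ r', (r' = r ∨ ToroidalAdj r r') ∧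
      (r' ≠ a ∧ ¬ ToroidalAdj a r') ∧ (r' ≠ b ∧ ¬ ToroidalAdj b r') := by
  decide +kernel

/-- At most two cops occupy a subset of some pair `a, b`, which can be chosen off a given vertex
that they avoid. -/
lemma exists_pair_cover {V : Type*} [Nontrivial V] {k : ℕ} (hk : k ≤ 2) (c : Fin k → V) (r : V) :
    ∃ a b, ((∀ i, c i ≠ r) → a ≠ r ∧ b ≠ r) ∧ ∀ i, c i = a ∨ c i = b := by
  obtain ⟨s, hs⟩ := exists_ne r
  interval_cases k
  · exact ⟨s, s, fun _ => ⟨hs, hs⟩, fun i => i.elim0⟩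
  · exact ⟨c 0, c 0, fun h => ⟨h 0, h 0⟩, fun i => by rw [Subsingleton.elim i 0]; simp⟩
  · exact ⟨c 0, c 1, fun h => ⟨h 0, h 1⟩, fun i => by fin_cases i <;> simp⟩

lemma toroidal_not_copWin {k : ℕ} (hk : k ≤ 2) :
    ¬ CopWin (SimpleGraph.cycleGraph 3 □ SimpleGraph.cycleGraph 5) k := by
  apply not_copWin_of_escape
  · intro c
    obtain ⟨a, b, -, hc⟩ := exists_pair_cover hk c (0, 0)
    obtain ⟨r, ha, hb⟩ := exists_undominated a b
    refine ⟨r, fun i => ?_⟩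
    rw [toroidalAdj_iff]
    rcases hc i with h | h <;> rw [h] <;> assumption
  · intro r c hr
    obtain ⟨a, b, hab, hc⟩ := exists_pair_cover hk c r
    obtain ⟨r', hmove, ha, hb⟩ := exists_escape r a b (hab hr).1 (hab hr).2
    refine ⟨r', by rwa [toroidalAdj_iff], fun i => ?_⟩
    rw [toroidalAdj_iff]
    rcases hc i with h | h <;> rw [h] <;> assumption

/-- On a finite graph, cops occupying every vertex win at once. -/
lemma copWin_card {V : Type*} [Fintype V] (G : SimpleGraph V) : CopWin G (Fintype.card V) := by
  let e := (Fintype.equivFin V).symm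
  refine ⟨e, fun _ => e, fun rob _ => ⟨fun n i => Or.inl ?_, 0, e.symm (rob 0), Or.inl ?_⟩⟩
  · cases n <;> rfl
  · simp [copSeq]

/-- The 3-by-5 toroidal grid `C₃ □ C₅` is an outer-string graph and its cop number
is at least 3. -/
theorem toroidalGrid_outerString_copNumber :
    (∃ S : Fin 3 × Fin 5 → Set (ℝ × ℝ), (∀ v, IsOuterString (S v)) ∧
      ∀ u v, (SimpleGraph.cycleGraph 3 □ SimpleGraph.cycleGraph 5).Adj u v ↔
        u ≠ v ∧ (S u ∩ S v).Nonempty) ∧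
    3 ≤ copNumber (SimpleGraph.cycleGraph 3 □ SimpleGraph.cycleGraph 5) := by
  refine ⟨⟨toroidalString, isOuterString_toroidalString, fun u v => ?_⟩, ?_⟩
  · rw [toroidalAdj_iff]
    exact toroidalString_inter u v
  · refine le_csInf ⟨_, copWin_card _⟩ fun k hk => ?_
    by_contra h
    exact toroidal_not_copWin (by omega) hk
end
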